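/- arXiv:2508.19066 — 14 statements merged into one kernel-verified Lean document; each statement's English description precedes it below -/
import Mathlib

section
/- For every a ∈ A(ℂ) with first-row parameters a₁, …, a_{n−1} and every 1 ≤ i ≤ n−1, the sum of all principal i×i minors of a (that is, the value χ_i(a) of the i-th fundamental character of SL(n), equal to the trace of the i-th exterior power of a) equals (−1)^{i−1}·a_i. Consequently the map a ↦ (χ₁(a), …, χ_{n−1}(a)) is a bijection from A(ℂ) onto ℂ^{n−1}. -/
/-- The set of `R`-points of Steinberg's cross-section `A = U(c⁻¹)·c̄` for `G = SL(n)` and the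
standard Coxeter element `c = s₁s₂⋯s_{n−1}`: the first row is `(a₁, …, a_{n−1}, (−1)^{n−1})`,
the subdiagonal entries are `1`, and all remaining entries are `0`. -/
def IsSteinbergA {n : ℕ} {R : Type*} [CommRing R] (m : Matrix (Fin n) (Fin n) R) : Prop :=
  (∀ i j : Fin n, (i : ℕ) = 0 → (j : ℕ) = n - 1 → m i j = (-1) ^ (n - 1)) ∧
  (∀ i j : Fin n, (i : ℕ) = (j : ℕ) + 1 → m i j = 1) ∧
  (∀ i j : Fin n, (i : ℕ) ≠ 0 → (i : ℕ) ≠ (j : ℕ) + 1 → m i j = 0)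

/-- The sum of all principal `i × i` minors of an `n × n` matrix, i.e. the trace of the `i`-th
exterior power, i.e. the value of the `i`-th fundamental character. -/
noncomputable def principalMinorSum {n : ℕ} {R : Type*} [CommRing R]
    (m : Matrix (Fin n) (Fin n) R) (i : ℕ) : R :=
  ∑ S ∈ ((Finset.univ : Finset (Fin n)).powersetCard i).attach,
    Matrix.det (Matrix.of fun a b : Fin i =>
      m ((S.1.orderIsoOfFin (Finset.mem_powersetCard.mp S.2).2 a : Fin n))
        ((S.1.orderIsoOfFin (Finset.mem_powersetCard.mp S.2).2 b : Fin n)))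

theorem det_comp {N : ℕ} (M : Matrix (Fin (N+1)) (Fin (N+1)) ℂ)
    (h1 : ∀ i j : Fin (N+1), (i : ℕ) = (j : ℕ) + 1 → M i j = 1)
    (h2 : ∀ i j : Fin (N+1), (i : ℕ) ≠ 0 → (i : ℕ) ≠ (j : ℕ) + 1 → M i j = 0) :
    M.det = (-1) ^ N * M 0 (Fin.last N) := by
  rw [Matrix.det_succ_column M (Fin.last N), Finset.sum_eq_single 0]
  · have : M.submatrix (Fin.succAbove 0) (Fin.succAbove (Fin.last N)) = 1 := by
      ext i j
      by_cases hij : i = j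
      · subst hij
        simp only [Matrix.submatrix_apply, Matrix.one_apply_eq]
        apply h1
        simp
      · rw [Matrix.one_apply_ne hij]
        apply h2
        · simp
        · simp only [Fin.succAbove_zero, Fin.val_succ, Fin.succAbove_last, Fin.val_castSucc]
          intro h
          exact hij (Fin.ext (by omega))
    rw [this]
    simp
  · intro b _ hb
    rw [h2 b (Fin.last N)]
    · simp
    · intro h
      exact hb (Fin.ext h)
    · have := b.2
      simp only [Fin.val_last]
      omega
  · simp

theorem chi_eq {n : ℕ} (m : Matrix (Fin n) (Fin n) ℂ) (hm : IsSteinbergA m)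
    (N : ℕ) (hN : N + 1 ≤ n) (i₀ j : Fin n) (hi₀ : (i₀ : ℕ) = 0) (hj : (j : ℕ) = N) :
    principalMinorSum m (N + 1) = (-1) ^ N * m i₀ j := by
  obtain ⟨-, h1, h2⟩ := hm
  -- either the enumeration is initial, or there is a zero row
  have key : ∀ e : Fin (N+1) → Fin n, StrictMono e →
      (∀ k, (e k : ℕ) = 0 ∨ ∃ l, (e k : ℕ) = (e l : ℕ) + 1) → ∀ k, (e k : ℕ) = (k : ℕ) := by
    intro e he h k
    induction k using Fin.induction with
    | zero =>
      rcases h 0 with h0 | ⟨l, hl⟩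
      · simpa using h0
      · have : e 0 ≤ e l := he.monotone (Fin.zero_le l)
        have : (e 0 : ℕ) ≤ e l := this
        omega
    | succ k ih =>
      have hlt : (e k.castSucc : ℕ) < e k.succ := he (Fin.castSucc_lt_succ)
      rw [Fin.val_castSucc] at ih
      rw [Fin.val_succ]
      rcases h k.succ with h0 | ⟨l, hl⟩
      · omega
      · have hll : e l < e k.succ := by
          show (e l : ℕ) < e k.succ
          omega
        have hl2 : l < k.succ := he.lt_iff_lt.mp hll
        have hl3 : l ≤ k.castSucc := Fin.le_castSucc_iff.mpr hl2
        have : (e l : ℕ) ≤ e k.castSucc := he.monotone hl3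
        omega
  let S₀ : Finset (Fin n) := Finset.univ.map (Fin.castLEEmb hN)
  have hS₀ : S₀ ∈ (Finset.univ : Finset (Fin n)).powersetCard (N+1) := by
    simp [S₀, Finset.mem_powersetCard]
  unfold principalMinorSum
  rw [Finset.sum_eq_single (⟨S₀, hS₀⟩ : {x // x ∈ (Finset.univ : Finset (Fin n)).powersetCard (N+1)})]
  · have hcard := (Finset.mem_powersetCard.mp hS₀).2
    have hev : ∀ k, (S₀.orderIsoOfFin hcard k : Fin n) = Fin.castLE hN k := by
      intro k
      have := Finset.orderEmbOfFin_unique hcard (f := Fin.castLE hN)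
        (by intro x; simp [S₀]) (Fin.strictMono_castLE hN)
      rw [this]
      rfl
    rw [det_comp]
    · congr 1
      simp only [Matrix.of_apply, hev]
      congr 1
      · apply Fin.ext; simp [hi₀]
      · apply Fin.ext; simp [hj]
    · intro a b hab
      simp only [Matrix.of_apply, hev]
      exact h1 _ _ (by simpa using hab)
    · intro a b ha hab
      simp only [Matrix.of_apply, hev]
      exact h2 _ _ (by simpa using ha) (by simpa using hab)
  · rintro ⟨S, hS⟩ _ hne
    have hcard := (Finset.mem_powersetCard.mp hS).2
    let e : Fin (N+1) → Fin n := fun k => (S.orderIsoOfFin hcard k : Fin n)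
    have he : StrictMono e := fun a b hab => (S.orderIsoOfFin hcard).strictMono hab
    by_cases h : ∀ k, (e k : ℕ) = 0 ∨ ∃ l, (e k : ℕ) = (e l : ℕ) + 1
    · exfalso
      have hk := key e he h
      apply hne
      apply Subtype.ext
      show S = S₀
      symm
      apply Finset.eq_of_subset_of_card_le
      · intro x hx
        simp only [S₀, Finset.mem_map, Finset.mem_univ, true_and] at hx
        obtain ⟨k, rfl⟩ := hx
        have : Fin.castLEEmb hN k = e k := Fin.ext (by simp [hk])
        rw [this]
        exact (S.orderIsoOfFin hcard k).2
      · rw [hcard, (Finset.mem_powersetCard.mp hS₀).2]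
    · push Not at h
      obtain ⟨k, hk0, hk⟩ := h
      exact Matrix.det_eq_zero_of_row_eq_zero k (fun l => h2 _ _ hk0 (hk l))
  · intro h
    exact absurd (Finset.mem_attach _ _) h

/-- For every `a ∈ A(ℂ)` with first-row parameters `a₁, …, a_{n−1}` and every
`1 ≤ i ≤ n − 1`, the sum of all principal `i × i` minors of `a` equals `(−1)^{i−1} · a_i`;
consequently `a ↦ (χ₁(a), …, χ_{n−1}(a))` is a bijection from `A(ℂ)` onto `ℂ^{n−1}`. -/
theorem stmt_1 (n : ℕ) (hn : 2 ≤ n) :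
    (∀ m : Matrix (Fin n) (Fin n) ℂ, IsSteinbergA m →
      ∀ i : ℕ, 1 ≤ i → i ≤ n - 1 → ∀ i₀ j : Fin n, (i₀ : ℕ) = 0 → (j : ℕ) = i - 1 →
        principalMinorSum m i = (-1) ^ (i - 1) * m i₀ j) ∧
    Function.Bijective
      (fun a : {m : Matrix (Fin n) (Fin n) ℂ // IsSteinbergA m} =>
        fun i : Fin (n - 1) => principalMinorSum a.1 ((i : ℕ) + 1)) := by
  refine ⟨?_, ?_, ?_⟩
  · intro m hm i hi hin i₀ j hi₀ hj
    obtain ⟨N, rfl⟩ : ∃ N, i = N + 1 := ⟨i - 1, by omega⟩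
    exact chi_eq m hm N (by omega) i₀ j hi₀ hj
  · rintro ⟨m, hm⟩ ⟨m', hm'⟩ h
    apply Subtype.ext
    show m = m'
    ext i j
    by_cases hi : (i : ℕ) = 0
    · by_cases hj : (j : ℕ) = n - 1
      · rw [hm.1 i j hi hj, hm'.1 i j hi hj]
      · have hlt : (j : ℕ) < n - 1 := by have := j.2; omega
        have h3 : principalMinorSum m ((j : ℕ) + 1) = principalMinorSum m' ((j : ℕ) + 1) :=
          congrFun h ⟨j, hlt⟩
        rw [chi_eq m hm j (by omega) i j hi rfl, chi_eq m' hm' j (by omega) i j hi rfl] at h3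
        exact mul_left_cancel₀ (pow_ne_zero _ (by norm_num)) h3
    · by_cases hij : (i : ℕ) = (j : ℕ) + 1
      · rw [hm.2.1 i j hij, hm'.2.1 i j hij]
      · rw [hm.2.2 i j hi hij, hm'.2.2 i j hi hij]
  · intro y
    let m : Matrix (Fin n) (Fin n) ℂ := fun i j =>
      if (i : ℕ) = 0 then
        if h : (j : ℕ) < n - 1 then (-1) ^ (j : ℕ) * y ⟨j, h⟩ else (-1) ^ (n - 1)
      else if (i : ℕ) = (j : ℕ) + 1 then 1 else 0
    have hm : IsSteinbergA m := by
      refine ⟨?_, ?_, ?_⟩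
      · intro i j hi hj
        have : ¬ (j : ℕ) < n - 1 := by omega
        simp only [m, hi, if_true, dif_neg this]
      · intro i j hij
        have : (i : ℕ) ≠ 0 := by omega
        simp only [m, if_neg this, if_pos hij]
      · intro i j hi hij
        simp only [m, if_neg hi, if_neg hij]
    refine ⟨⟨m, hm⟩, ?_⟩
    funext k
    have hk := k.2
    show principalMinorSum m ((k : ℕ) + 1) = y k
    rw [chi_eq m hm k (by omega) ⟨0, by omega⟩ ⟨k, by omega⟩ rfl rfl]
    simp only [m, if_true, dif_pos hk]
    rw [← mul_assoc, ← mul_pow]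
    simp
end

section
/- Every regular element g of SL(n, ℂ), i.e., every g ∈ SL(n, ℂ) whose minimal polynomial has degree n (equivalently, whose minimal and characteristic polynomials coincide), is conjugate under SL(n, ℂ) to exactly one element of A(ℂ). In other words, A(ℂ) is a cross-section of the collection of conjugacy classes of regular elements of SL(n, ℂ). -/
open Matrix Polynomial in
/-- Existence of a cyclic covector. -/
lemma exists_cyclic_covector {n : ℕ} (g : Matrix (Fin n) (Fin n) ℂ)
    (hreg : (minpoly ℂ g).natDegree = n) :
    ∃ w : Fin n → ℂ, ∀ p : ℂ[X], p ≠ 0 → p.degree < n → w ᵥ* (aeval g p) ≠ 0 := by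
  classical
  have hint : IsIntegral ℂ g := Algebra.IsIntegral.isIntegral g
  have hmu0 : minpoly ℂ g ≠ 0 := minpoly.ne_zero hint
  let S : Finset ℂ[X] :=
    (((minpoly ℂ g).roots.powerset.map
      (fun s => (s.map (fun r => X - C r)).prod)).toFinset).filter (fun d => aeval g d ≠ 0)
  let K : ℂ[X] → Submodule ℂ (Fin n → ℂ) := fun d => LinearMap.ker (aeval g d).vecMulLinear
  have htop : (⊤ : Submodule ℂ (Fin n → ℂ)) ∉ S.image K := by
    intro h
    obtain ⟨d, hd, hK⟩ := Finset.mem_image.1 h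
    have hd' := (Finset.mem_filter.1 hd).2
    apply hd'
    have hz : ∀ v : Fin n → ℂ, v ᵥ* (aeval g d) = 0 := by
      intro v
      have : v ∈ K d := by rw [hK]; trivial
      simpa [K] using this
    ext i j
    have := congrFun (hz (Pi.single i 1)) j
    simpa using this
  have hne := Subspace.biUnion_ne_univ_of_top_notMem htop
  obtain ⟨w, hw⟩ := (Set.ne_univ_iff_exists_notMem _).1 hne
  refine ⟨w, fun p hp hdeg hwp => hw ?_⟩
  set d := EuclideanDomain.gcd p (minpoly ℂ g) with hd
  have hd0 : d ≠ 0 := fun h => hp (EuclideanDomain.gcd_eq_zero_iff.1 h).1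
  have hdp : d ∣ p := EuclideanDomain.gcd_dvd_left _ _
  have hdm : d ∣ minpoly ℂ g := EuclideanDomain.gcd_dvd_right _ _
  have hwd : w ᵥ* (aeval g d) = 0 := by
    rw [hd, EuclideanDomain.gcd_eq_gcd_ab]
    simp only [map_add, map_mul, minpoly.aeval, zero_mul, add_zero]
    rw [← Matrix.vecMul_vecMul, hwp, Matrix.zero_vecMul]
  have hfac : d = C d.leadingCoeff * (d.roots.map (fun r => X - C r)).prod :=
    (IsAlgClosed.splits d).eq_prod_roots
  set e := (d.roots.map (fun r => X - C r)).prod with he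
  have hlc : d.leadingCoeff ≠ 0 := leadingCoeff_ne_zero.2 hd0
  have hag : aeval g d = d.leadingCoeff • aeval g e := by
    conv_lhs => rw [hfac]
    simp [Algebra.smul_def]
  have hdn : aeval g d ≠ 0 := by
    intro h
    have h1 := minpoly.dvd ℂ g h
    have h2 := degree_le_of_dvd (h1.trans hdp) hp
    rw [degree_eq_natDegree hmu0, hreg] at h2
    exact absurd hdeg (not_lt.2 h2)
  have heS : e ∈ S := by
    refine Finset.mem_filter.2 ⟨?_, ?_⟩
    · rw [Multiset.mem_toFinset, Multiset.mem_map]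
      exact ⟨d.roots, Multiset.mem_powerset.2 (Polynomial.roots.le_of_dvd hmu0 hdm), rfl⟩
    · intro h
      apply hdn
      rw [hag, h, smul_zero]
  have hwe : w ∈ K e := by
    have : d.leadingCoeff • (w ᵥ* (aeval g e)) = 0 := by
      rw [← Matrix.vecMul_smul, ← hag, hwd]
    have := (smul_eq_zero.1 this).resolve_left hlc
    simpa [K] using this
  simp only [Set.mem_iUnion]
  exact ⟨K e, Finset.mem_image_of_mem K heS, hwe⟩

open Matrix in
lemma det_companion {m : ℕ} (a : Matrix (Fin (m + 1)) (Fin (m + 1)) ℂ)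
    (h1 : ∀ i j : Fin (m + 1), (i : ℕ) = (j : ℕ) + 1 → a i j = 1)
    (h0 : ∀ i j : Fin (m + 1), (i : ℕ) ≠ 0 → (i : ℕ) ≠ (j : ℕ) + 1 → a i j = 0) :
    a.det = (-1) ^ m * a 0 (Fin.last m) := by
  rw [Matrix.det_succ_column a (Fin.last m), Fin.sum_univ_succ]
  have hs : a.submatrix (Fin.succAbove 0) (Fin.succAbove (Fin.last m)) = 1 := by
    ext i j
    simp only [submatrix_apply, Fin.succAbove_zero, Fin.succAbove_last, Matrix.one_apply]
    split_ifs with h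
    · subst h; exact h1 _ _ (by simp)
    · exact h0 _ _ (by simp) (by simpa [Fin.ext_iff] using h)
  rw [hs, Finset.sum_eq_zero]
  · simp
  · intro i _
    rw [h0 i.succ (Fin.last m) (by simp) (by simp; omega)]
    simp

open Matrix in
lemma companion_pow_row {m : ℕ} (a : Matrix (Fin (m + 1)) (Fin (m + 1)) ℂ)
    (h1 : ∀ i j : Fin (m + 1), (i : ℕ) = (j : ℕ) + 1 → a i j = 1)
    (h0 : ∀ i j : Fin (m + 1), (i : ℕ) ≠ 0 → (i : ℕ) ≠ (j : ℕ) + 1 → a i j = 0)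
    (j : ℕ) (hj : j < m + 1) (k : Fin (m + 1)) :
    (a ^ j) (Fin.last m) k = if (k : ℕ) + j = m then 1 else 0 := by
  induction j generalizing k with
  | zero =>
    simp only [pow_zero, Matrix.one_apply, Fin.ext_iff, Fin.val_last, add_zero]
    exact if_congr eq_comm rfl rfl
  | succ j ih =>
    rw [pow_succ, Matrix.mul_apply, Finset.sum_eq_single (⟨m - j, by omega⟩ : Fin (m + 1))]
    · rw [ih (by omega), if_pos (by simp; omega), one_mul]
      split_ifs with h
      · exact h1 _ _ (by simp; omega)
      · exact h0 _ _ (by simp; omega) (by simp; omega)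
    · intro b _ hb
      rw [ih (by omega), if_neg, zero_mul]
      intro h
      apply hb
      ext
      simp
      omega
    · simp

open Matrix in
lemma companion_pow_top {m : ℕ} (a : Matrix (Fin (m + 1)) (Fin (m + 1)) ℂ)
    (h1 : ∀ i j : Fin (m + 1), (i : ℕ) = (j : ℕ) + 1 → a i j = 1)
    (h0 : ∀ i j : Fin (m + 1), (i : ℕ) ≠ 0 → (i : ℕ) ≠ (j : ℕ) + 1 → a i j = 0)
    (k : Fin (m + 1)) :
    (a ^ (m + 1)) (Fin.last m) k = a 0 k := by
  rw [pow_succ, Matrix.mul_apply, Finset.sum_eq_single (0 : Fin (m + 1))]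
  · rw [companion_pow_row a h1 h0 m (by omega)]
    simp
  · intro b _ hb
    rw [companion_pow_row a h1 h0 m (by omega), if_neg, zero_mul]
    intro h
    apply hb
    exact Fin.ext (by rw [Fin.val_zero]; omega)
  · simp

open Matrix in
lemma companion_row_zero {m : ℕ} (a : Matrix (Fin (m + 1)) (Fin (m + 1)) ℂ)
    (h1 : ∀ i j : Fin (m + 1), (i : ℕ) = (j : ℕ) + 1 → a i j = 1)
    (h0 : ∀ i j : Fin (m + 1), (i : ℕ) ≠ 0 → (i : ℕ) ≠ (j : ℕ) + 1 → a i j = 0)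
    (k : Fin (m + 1)) :
    a 0 k = - ∑ i ∈ Finset.range (m + 1),
      a.charpoly.coeff i * (if (k : ℕ) + i = m then 1 else 0) := by
  have h := Matrix.aeval_self_charpoly a
  have hdeg : a.charpoly.natDegree = m + 1 := by
    rw [Matrix.charpoly_natDegree_eq_dim, Fintype.card_fin]
  have hlead : a.charpoly.coeff (m + 1) = 1 := by
    have := Matrix.charpoly_monic a
    rw [Polynomial.Monic, Polynomial.leadingCoeff, hdeg] at this
    exact this
  rw [Polynomial.aeval_eq_sum_range, hdeg, Finset.sum_range_succ, hlead, one_smul] at h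
  have h2 := congrFun (congrFun h (Fin.last m)) k
  rw [Matrix.add_apply, companion_pow_top a h1 h0, Matrix.sum_apply] at h2
  have h3 : ∑ i ∈ Finset.range (m + 1), (a.charpoly.coeff i • a ^ i) (Fin.last m) k
      = ∑ i ∈ Finset.range (m + 1),
      a.charpoly.coeff i * (if (k : ℕ) + i = m then 1 else 0) := by
    refine Finset.sum_congr rfl fun i hi => ?_
    rw [Matrix.smul_apply, companion_pow_row a h1 h0 i (Finset.mem_range.1 hi), smul_eq_mul]
  rw [h3] at h2
  simp only [Matrix.zero_apply] at h2
  linear_combination h2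

lemma steinberg_unique {m : ℕ} (a b : Matrix (Fin (m + 1)) (Fin (m + 1)) ℂ)
    (ha : IsSteinbergA a) (hb : IsSteinbergA b) (h : a.charpoly = b.charpoly) : a = b := by
  ext i j
  by_cases hi : (i : ℕ) = 0
  · have : i = 0 := Fin.ext hi
    subst this
    rw [companion_row_zero a ha.2.1 ha.2.2, companion_row_zero b hb.2.1 hb.2.2, h]
  · by_cases hij : (i : ℕ) = j + 1
    · rw [ha.2.1 _ _ hij, hb.2.1 _ _ hij]
    · rw [ha.2.2 _ _ hi hij, hb.2.2 _ _ hi hij]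

open Matrix in
lemma charpoly_conj_SL {n : ℕ} (h g : Matrix.SpecialLinearGroup (Fin n) ℂ) :
    ((h * g * h⁻¹ : Matrix.SpecialLinearGroup (Fin n) ℂ) : Matrix (Fin n) (Fin n) ℂ).charpoly
      = (g : Matrix (Fin n) (Fin n) ℂ).charpoly := by
  rw [Matrix.SpecialLinearGroup.coe_mul, Matrix.charpoly_mul_comm,
    ← Matrix.SpecialLinearGroup.coe_mul, ← mul_assoc, inv_mul_cancel, one_mul]

open Matrix Polynomial in
lemma exists_conj {m : ℕ} (g : Matrix.SpecialLinearGroup (Fin (m + 1)) ℂ)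
    (hreg : (minpoly ℂ (g : Matrix (Fin (m + 1)) (Fin (m + 1)) ℂ)).natDegree = m + 1) :
    ∃ h : Matrix.SpecialLinearGroup (Fin (m + 1)) ℂ,
      IsSteinbergA ((h * g * h⁻¹ : Matrix.SpecialLinearGroup (Fin (m + 1)) ℂ) :
        Matrix (Fin (m + 1)) (Fin (m + 1)) ℂ) := by
  obtain ⟨w, hw⟩ := exists_cyclic_covector _ hreg
  set G : Matrix (Fin (m + 1)) (Fin (m + 1)) ℂ := g.val with hG
  let H : Matrix (Fin (m + 1)) (Fin (m + 1)) ℂ := Matrix.of fun i => w ᵥ* G ^ (m - (i : ℕ))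
  have hdet : H.det ≠ 0 := by
    intro h
    obtain ⟨c, hc, hcH⟩ := Matrix.exists_vecMul_eq_zero_iff.2 h
    let p : ℂ[X] := ∑ i : Fin (m + 1), C (c i) * X ^ (m - (i : ℕ))
    have hcoeff : ∀ j : Fin (m + 1), p.coeff (m - (j : ℕ)) = c j := by
      intro j
      simp only [p, finsetSum_coeff, coeff_C_mul, coeff_X_pow]
      rw [Finset.sum_eq_single j]
      · simp
      · intro b _ hb
        rw [if_neg, mul_zero]
        intro h
        apply hb
        ext
        omega
      · simp
    have hp0 : p ≠ 0 := by
      intro h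
      apply hc
      ext j
      rw [← hcoeff, h]
      simp
    have hpd : p.degree < ((m + 1 : ℕ) : WithBot ℕ) := by
      refine (Polynomial.degree_sum_le _ _).trans_lt ?_
      rw [Finset.sup_lt_iff (WithBot.bot_lt_coe _)]
      intro i _
      refine (degree_C_mul_X_pow_le _ _).trans_lt ?_
      exact_mod_cast (by omega : m - (i : ℕ) < m + 1)
    apply hw p hp0 hpd
    rw [← hcH]
    simp only [p, map_sum, map_mul, aeval_C, map_pow, aeval_X, ← Algebra.smul_def]
    ext j
    simp only [Matrix.vecMul, dotProduct, Matrix.sum_apply, Matrix.smul_apply, smul_eq_mul, H,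
      Matrix.of_apply, Finset.mul_sum]
    rw [Finset.sum_comm]
    refine Finset.sum_congr rfl fun i _ => Finset.sum_congr rfl fun k _ => ?_
    ring
  obtain ⟨t, ht⟩ := IsAlgClosed.exists_pow_nat_eq (H.det)⁻¹ (Nat.succ_pos m)
  let h : Matrix.SpecialLinearGroup (Fin (m + 1)) ℂ := ⟨t • H, by
    rw [Matrix.det_smul, Fintype.card_fin, ht, inv_mul_cancel₀ hdet]⟩
  refine ⟨h, ?_⟩
  set a := h * g * h⁻¹ with ha
  have hah : (a : Matrix (Fin (m + 1)) (Fin (m + 1)) ℂ) * (t • H) = (t • H) * G := by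
    have : a * h = h * g := by rw [ha]; group
    exact congrArg Subtype.val this
  have hrow : ∀ i j : Fin (m + 1), (i : ℕ) = (j : ℕ) + 1 →
      (a : Matrix (Fin (m + 1)) (Fin (m + 1)) ℂ) i = Pi.single j 1 := by
    intro i j hij
    have hHG : ((t • H) * G) i = (t • H) j := by
      rw [Matrix.mul_apply_eq_vecMul]
      have e1 : (t • H) i = t • (w ᵥ* G ^ (m - (i : ℕ))) := rfl
      have e2 : (t • H) j = t • (w ᵥ* G ^ (m - (j : ℕ))) := rfl
      rw [e1, e2, Matrix.smul_vecMul, Matrix.vecMul_vecMul, ← pow_succ]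
      congr 3
      omega
    have hinj : Function.Injective (fun v : Fin (m + 1) → ℂ => v ᵥ* h.val) :=
      Matrix.vecMul_injective_of_isUnit ((Matrix.isUnit_iff_isUnit_det h.val).2
        (by rw [h.prop]; exact isUnit_one))
    apply hinj
    change _ ᵥ* (t • H) = _ ᵥ* (t • H)
    rw [← Matrix.mul_apply_eq_vecMul, hah, hHG, Matrix.single_one_vecMul]
    rfl
  have h1 : ∀ i j : Fin (m + 1), (i : ℕ) = (j : ℕ) + 1 →
      (a : Matrix (Fin (m + 1)) (Fin (m + 1)) ℂ) i j = 1 := by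
    intro i j hij
    rw [hrow i j hij]
    simp
  have h0 : ∀ i j : Fin (m + 1), (i : ℕ) ≠ 0 → (i : ℕ) ≠ (j : ℕ) + 1 →
      (a : Matrix (Fin (m + 1)) (Fin (m + 1)) ℂ) i j = 0 := by
    intro i j hi hij
    rw [hrow i ⟨(i : ℕ) - 1, by omega⟩ (by simp; omega)]
    rw [Pi.single_eq_of_ne]
    intro h
    have := congrArg Fin.val h
    simp at this
    omega
  refine ⟨?_, h1, h0⟩
  intro i j hi hj
  obtain rfl : i = 0 := Fin.ext hi
  obtain rfl : j = Fin.last m := Fin.ext (by simpa using hj)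
  have hd := det_companion _ h1 h0
  rw [Matrix.SpecialLinearGroup.det_coe] at hd
  have hs : ((-1 : ℂ) ^ m) * (-1) ^ m = 1 := by
    rw [← mul_pow]; simp
  rw [Nat.add_sub_cancel]
  linear_combination (-(-1 : ℂ) ^ m) * hd -
    (a : Matrix (Fin (m + 1)) (Fin (m + 1)) ℂ) 0 (Fin.last m) * hs

/-- Every regular element `g` of `SL(n, ℂ)` (one whose minimal polynomial has
degree `n`) is conjugate under `SL(n, ℂ)` to exactly one element of `A(ℂ)`: Steinberg's
cross-section theorem for `SL(n)`. -/
theorem stmt_2 (n : ℕ) (hn : 2 ≤ n) (g : Matrix.SpecialLinearGroup (Fin n) ℂ)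
    (hreg : (minpoly ℂ (g : Matrix (Fin n) (Fin n) ℂ)).natDegree = n) :
    ∃! a : Matrix (Fin n) (Fin n) ℂ, IsSteinbergA a ∧
      ∃ h : Matrix.SpecialLinearGroup (Fin n) ℂ,
        ((h * g * h⁻¹ : Matrix.SpecialLinearGroup (Fin n) ℂ) : Matrix (Fin n) (Fin n) ℂ) = a := by
  obtain ⟨m, rfl⟩ : ∃ m, n = m + 1 := ⟨n - 1, by omega⟩
  obtain ⟨h, hh⟩ := exists_conj g hreg
  refine ⟨_, ⟨hh, h, rfl⟩, ?_⟩
  rintro b ⟨hb, k, rfl⟩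
  exact steinberg_unique _ _ hb hh (by rw [charpoly_conj_SL, charpoly_conj_SL])
end

section
/- Let R be a commutative ring and a ∈ A(R). For 1 ≤ i ≤ n−1 and k ≥ 0 let θ_{i,k} ∈ R denote the determinant of the top-left i×i submatrix of the power a^k, and set by convention θ_{0,k} := 1 and θ_{n,k} := 1 (note also θ_{i,0} = 1). Then for all 1 ≤ i ≤ n−1 and all k ≥ 1 the Q-system relation holds: θ_{i,k}² = θ_{i,k−1}·θ_{i,k+1} + θ_{i−1,k}·θ_{i+1,k}. -/
/-- `θ_{i,k}`: the determinant of the top-left `i × i` submatrix of `m ^ k`, with the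
conventions `θ_{0,k} = 1` and `θ_{n,k} = 1`. -/
noncomputable def theta {n : ℕ} {R : Type*} [CommRing R]
    (m : Matrix (Fin n) (Fin n) R) (i k : ℕ) : R :=
  if i = 0 ∨ i = n then 1
  else if h : i ≤ n then ((m ^ k).submatrix (Fin.castLE h) (Fin.castLE h)).det
  else 0

/-- Inclusion of the interior indices together with one of the two border indices. -/
def qsG (ι : Type) (p : Fin 2) : ι ⊕ Unit → ι ⊕ Fin 2 := Sum.map id (fun _ => p)

lemma qs_minor {ι : Type} [Fintype ι] [DecidableEq ι] {K : Type*} [Field K]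
    (M : Matrix (ι ⊕ Fin 2) (ι ⊕ Fin 2) K) [Invertible M.toBlocks₁₁] (p q : Fin 2) :
    (M.submatrix (qsG ι p) (qsG ι q)).det = M.toBlocks₁₁.det *
      (M.toBlocks₂₂ - M.toBlocks₂₁ * ⅟(M.toBlocks₁₁) * M.toBlocks₁₂) p q := by
  have h : M.submatrix (qsG ι p) (qsG ι q) = Matrix.fromBlocks M.toBlocks₁₁
      (M.toBlocks₁₂.submatrix id (fun _ : Unit => q)) (M.toBlocks₂₁.submatrix (fun _ : Unit => p) id)
      (M.toBlocks₂₂.submatrix (fun _ : Unit => p) (fun _ : Unit => q)) := by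
    ext (i | i) (j | j) <;> rfl
  rw [h, Matrix.det_fromBlocks₁₁]
  congr 1
  rw [Matrix.det_unique]
  rfl

lemma qs_dodgson_field {ι : Type} [Fintype ι] [DecidableEq ι] {K : Type*} [Field K]
    (M : Matrix (ι ⊕ Fin 2) (ι ⊕ Fin 2) K) (hM : M.toBlocks₁₁.det ≠ 0) :
    M.det * (M.submatrix Sum.inl Sum.inl).det =
      (M.submatrix (qsG ι 0) (qsG ι 0)).det * (M.submatrix (qsG ι 1) (qsG ι 1)).det -
      (M.submatrix (qsG ι 0) (qsG ι 1)).det * (M.submatrix (qsG ι 1) (qsG ι 0)).det := by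
  haveI : Invertible M.toBlocks₁₁ := Matrix.invertibleOfIsUnitDet _ (isUnit_iff_ne_zero.mpr hM)
  have h1 : M.submatrix Sum.inl Sum.inl = M.toBlocks₁₁ := rfl
  have h2 : M.det = M.toBlocks₁₁.det *
      (M.toBlocks₂₂ - M.toBlocks₂₁ * ⅟(M.toBlocks₁₁) * M.toBlocks₁₂).det := by
    conv_lhs => rw [← Matrix.fromBlocks_toBlocks M]
    rw [Matrix.det_fromBlocks₁₁]
  simp only [qs_minor, h1, h2, Matrix.det_fin_two]
  ring

lemma qs_dodgson {ι : Type} [Fintype ι] [DecidableEq ι] {R : Type*} [CommRing R]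
    (M : Matrix (ι ⊕ Fin 2) (ι ⊕ Fin 2) R) :
    M.det * (M.submatrix Sum.inl Sum.inl).det =
      (M.submatrix (qsG ι 0) (qsG ι 0)).det * (M.submatrix (qsG ι 1) (qsG ι 1)).det -
      (M.submatrix (qsG ι 0) (qsG ι 1)).det * (M.submatrix (qsG ι 1) (qsG ι 0)).det := by
  let S := MvPolynomial ((ι ⊕ Fin 2) × (ι ⊕ Fin 2)) ℤ
  let X : Matrix (ι ⊕ Fin 2) (ι ⊕ Fin 2) S := Matrix.mvPolynomialX _ _ ℤ
  let φ := algebraMap S (FractionRing S)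
  have hφ : Function.Injective φ := IsFractionRing.injective S (FractionRing S)
  have key : X.det * (X.submatrix Sum.inl Sum.inl).det =
      (X.submatrix (qsG ι 0) (qsG ι 0)).det * (X.submatrix (qsG ι 1) (qsG ι 1)).det -
      (X.submatrix (qsG ι 0) (qsG ι 1)).det * (X.submatrix (qsG ι 1) (qsG ι 0)).det := by
    apply hφ
    have h := qs_dodgson_field (X.map φ) (by
      have : (X.map φ).toBlocks₁₁ = φ.mapMatrix (X.submatrix Sum.inl Sum.inl) := rfl
      rw [this, ← RingHom.map_det]
      intro h0
      have h1 : (X.submatrix Sum.inl Sum.inl).det = 0 := hφ (by rw [h0, map_zero])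
      have h2 := congrArg (MvPolynomial.eval₂Hom (RingHom.id ℤ)
        (fun p => (1 : Matrix (ι ⊕ Fin 2) (ι ⊕ Fin 2) ℤ) p.1 p.2)) h1
      rw [RingHom.map_det, map_zero] at h2
      have h3 : (MvPolynomial.eval₂Hom (RingHom.id ℤ)
        (fun p => (1 : Matrix (ι ⊕ Fin 2) (ι ⊕ Fin 2) ℤ) p.1 p.2)).mapMatrix
          (X.submatrix Sum.inl Sum.inl) = 1 := by
        ext i j
        simp [X, Matrix.one_apply]
      rw [h3, Matrix.det_one] at h2
      exact one_ne_zero h2)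
    simp only [map_mul, map_sub, RingHom.map_det, RingHom.mapMatrix_apply]
    exact h
  let ψ : S →+* R := MvPolynomial.eval₂Hom (Int.castRingHom R) (fun p => M p.1 p.2)
  have hX : X.map ψ = M := by
    ext i j
    exact MvPolynomial.eval₂Hom_X' _ _ _
  have h := congrArg ψ key
  simp only [map_mul, map_sub, RingHom.map_det, RingHom.mapMatrix_apply,
    Matrix.submatrix_map, hX] at h
  simpa only [← Matrix.submatrix_map, hX] using h

/-- Leading minor of an infinite matrix. -/
def qsD {R : Type*} [CommRing R] (m : ℕ) (f : ℕ → ℕ → R) : R :=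
  (Matrix.of fun r s : Fin m => f r s).det

lemma qs_reindex {α β R : Type*} [Fintype α] [DecidableEq α] [Fintype β] [DecidableEq β]
    [CommRing R] (e1 e2 : α ≃ β) (A B : Matrix β β R) :
    (A.submatrix e1 e2).det * (B.submatrix e2 e1).det = A.det * B.det := by
  have h1 : A.submatrix e1 e2 = (A.submatrix e2 e2).submatrix (e1.trans e2.symm) id := by
    ext; simp
  have h2 : B.submatrix e2 e1 = (B.submatrix e2 e2).submatrix id (e1.trans e2.symm) := by
    ext; simp
  rw [h1, h2, Matrix.det_permute, Matrix.det_permute', Matrix.det_submatrix_equiv_self,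
    Matrix.det_submatrix_equiv_self]
  have : ((Equiv.Perm.sign (e1.trans e2.symm) : ℤ) : R) *
      ((Equiv.Perm.sign (e1.trans e2.symm) : ℤ) : R) = 1 := by
    rw [← Int.cast_mul, ← Units.val_mul, Int.units_mul_self]; simp
  linear_combination (A.det * B.det) * this

/-- interior indices shifted by one, border index first -/
def qsFirst (m : ℕ) : Fin m ⊕ Unit → Fin (m + 1) := Sum.elim Fin.succ (fun _ => 0)
/-- interior indices, border index last -/
def qsLast (m : ℕ) : Fin m ⊕ Unit → Fin (m + 1) := Sum.elim Fin.castSucc (fun _ => Fin.last m)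
/-- interior indices shifted by one, border indices first and last -/
def qsBoth (m : ℕ) : Fin m ⊕ Fin 2 → Fin (m + 2) :=
  Sum.elim (fun j => j.castSucc.succ) (fun p => if p = 0 then 0 else Fin.last (m + 1))

lemma qsFirst_bij (m : ℕ) : Function.Bijective (qsFirst m) := by
  rw [Fintype.bijective_iff_injective_and_card]
  refine ⟨?_, by simp⟩
  rintro (x | x) (y | y) h <;> simp_all [qsFirst, Fin.ext_iff]

lemma qsLast_bij (m : ℕ) : Function.Bijective (qsLast m) := by
  rw [Fintype.bijective_iff_injective_and_card]
  refine ⟨?_, by simp⟩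
  rintro (x | x) (y | y) h <;> simp_all [qsLast, Fin.ext_iff] <;> omega

lemma qsBoth_bij (m : ℕ) : Function.Bijective (qsBoth m) := by
  rw [Fintype.bijective_iff_injective_and_card]
  refine ⟨?_, by simp⟩
  rintro (x | x) (y | y) h <;> replace h := congrArg Fin.val h
  · simp [qsBoth] at h
    rw [Fin.ext h]
  · fin_cases y <;> simp [qsBoth] at h ; omega
  · fin_cases x <;> simp [qsBoth] at h ; omega
  · fin_cases x <;> fin_cases y <;> simp [qsBoth] at h ⊢

lemma qsD_dodgson {R : Type*} [CommRing R] (m : ℕ) (f : ℕ → ℕ → R) :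
    qsD (m + 2) f * qsD m (fun r s => f (r + 1) (s + 1)) =
      qsD (m + 1) f * qsD (m + 1) (fun r s => f (r + 1) (s + 1)) -
      qsD (m + 1) (fun r s => f r (s + 1)) * qsD (m + 1) (fun r s => f (r + 1) s) := by
  let e1 := Equiv.ofBijective _ (qsFirst_bij m)
  let e2 := Equiv.ofBijective _ (qsLast_bij m)
  let e := Equiv.ofBijective _ (qsBoth_bij m)
  have h := qs_dodgson ((Matrix.of fun r s : Fin (m + 2) => f r s).submatrix e e)
  rw [Matrix.det_submatrix_equiv_self] at h
  have h00 : ((Matrix.of fun r s : Fin (m + 2) => f r s).submatrix e e).submatrix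
      (qsG (Fin m) 0) (qsG (Fin m) 0) =
      (Matrix.of fun r s : Fin (m + 1) => f r s).submatrix e1 e1 := by
    ext (i | i) (j | j) <;> simp [e, e1, qsG, qsFirst, qsBoth]
  have h11 : ((Matrix.of fun r s : Fin (m + 2) => f r s).submatrix e e).submatrix
      (qsG (Fin m) 1) (qsG (Fin m) 1) =
      (Matrix.of fun r s : Fin (m + 1) => f (r + 1) (s + 1)).submatrix e2 e2 := by
    ext (i | i) (j | j) <;> simp [e, e2, qsG, qsLast, qsBoth]
  have h01 : ((Matrix.of fun r s : Fin (m + 2) => f r s).submatrix e e).submatrix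
      (qsG (Fin m) 0) (qsG (Fin m) 1) =
      (Matrix.of fun r s : Fin (m + 1) => f r (s + 1)).submatrix e1 e2 := by
    ext (i | i) (j | j) <;> simp [e, e1, e2, qsG, qsFirst, qsLast, qsBoth]
  have h10 : ((Matrix.of fun r s : Fin (m + 2) => f r s).submatrix e e).submatrix
      (qsG (Fin m) 1) (qsG (Fin m) 0) =
      (Matrix.of fun r s : Fin (m + 1) => f (r + 1) s).submatrix e2 e1 := by
    ext (i | i) (j | j) <;> simp [e, e1, e2, qsG, qsFirst, qsLast, qsBoth]
  have hin : ((Matrix.of fun r s : Fin (m + 2) => f r s).submatrix e e).submatrix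
      Sum.inl Sum.inl = Matrix.of fun r s : Fin m => f (r + 1) (s + 1) := by
    ext i j; simp [e, qsBoth]
  rw [h00, h11, h01, h10, hin, qs_reindex, Matrix.det_submatrix_equiv_self,
    Matrix.det_submatrix_equiv_self] at h
  exact h

/-- First column of powers, extended by zero. -/
noncomputable def qsT {n : ℕ} {R : Type*} [CommRing R]
    (a : Matrix (Fin (n + 1)) (Fin (n + 1)) R) (k r : ℕ) : R :=
  if h : r < n + 1 then (a ^ k) ⟨r, h⟩ 0 else 0

lemma qs_shift {n : ℕ} {R : Type*} [CommRing R]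
    (a : Matrix (Fin (n + 1)) (Fin (n + 1)) R) (ha : IsSteinbergA a) (k r : ℕ) (hr : r + 1 < n + 1)
    (j : Fin (n + 1)) :
    (a ^ (k + 1)) ⟨r + 1, hr⟩ j = (a ^ k) ⟨r, by omega⟩ j := by
  rw [pow_succ', Matrix.mul_apply, Finset.sum_eq_single ⟨r, by omega⟩]
  · rw [ha.2.1 _ _ rfl, one_mul]
  · intro b _ hb
    rw [ha.2.2 _ _ (by simp) (by
      intro h; apply hb; ext; simp at h ⊢; omega), zero_mul]
  · simp

lemma qsT_shift {n : ℕ} {R : Type*} [CommRing R]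
    (a : Matrix (Fin (n + 1)) (Fin (n + 1)) R) (ha : IsSteinbergA a) (k r : ℕ) (hr : r < n) :
    qsT a (k + 1) (r + 1) = qsT a k r := by
  rw [qsT, qsT, dif_pos (by omega), dif_pos (by omega), qs_shift a ha]

lemma qsT_tri {n : ℕ} {R : Type*} [CommRing R]
    (a : Matrix (Fin (n + 1)) (Fin (n + 1)) R) (ha : IsSteinbergA a) (s : ℕ) :
    ∀ r, r < n + 1 → s ≤ r → qsT a s r = if r = s then 1 else 0 := by
  induction s with
  | zero =>
    intro r hr _
    rw [qsT, dif_pos hr, pow_zero, Matrix.one_apply]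
    simp [Fin.ext_iff]
  | succ s ih =>
    intro r hr hs
    obtain ⟨r, rfl⟩ : ∃ q, r = q + 1 := ⟨r - 1, by omega⟩
    rw [qsT_shift a ha _ _ (by omega), ih r (by omega) (by omega)]
    simp

lemma qs_det {n : ℕ} {R : Type*} [CommRing R]
    (a : Matrix (Fin (n + 1)) (Fin (n + 1)) R) (ha : IsSteinbergA a) : a.det = 1 := by
  rw [Matrix.det_succ_column a (Fin.last n), Finset.sum_eq_single 0]
  · rw [ha.1 0 (Fin.last n) rfl (by simp)]
    have : a.submatrix (Fin.succAbove 0) (Fin.last n).succAbove = 1 := by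
      ext i j
      rw [Matrix.submatrix_apply, Matrix.one_apply]
      split_ifs with h
      · subst h
        exact ha.2.1 _ _ (by simp)
      · exact ha.2.2 _ _ (by simp) (by simpa [Fin.ext_iff] using h)
    rw [this, Matrix.det_one]
    simp [← pow_add, ← two_mul]
  · intro b _ hb
    rw [ha.2.2 b (Fin.last n) (fun h => hb (Fin.ext h)) (by simp; omega)]
    simp
  · simp

lemma qs_lead {n : ℕ} {R : Type*} [CommRing R]
    (a : Matrix (Fin (n + 1)) (Fin (n + 1)) R) (ha : IsSteinbergA a) (i k : ℕ) (h : i ≤ n + 1) :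
    ((a ^ k).submatrix (Fin.castLE h) (Fin.castLE h)).det = qsD i (fun r s => qsT a (k + s) r) := by
  let U : Matrix (Fin i) (Fin i) R := Matrix.of fun r s => qsT a s r
  have hU : U.det = 1 := by
    rw [Matrix.det_of_isUpperTriangular]
    · apply Finset.prod_eq_one
      intro j _
      simp only [U, Matrix.of_apply]
      rw [qsT_tri a ha _ _ (by omega) le_rfl, if_pos rfl]
    · intro r s hrs
      have hrs' : (s : ℕ) < r := hrs
      simp only [U, Matrix.of_apply]
      rw [qsT_tri a ha _ _ (by omega) hrs'.le, if_neg (by omega)]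
  rw [← mul_one (Matrix.det _), ← hU, ← Matrix.det_mul, qsD]
  congr 1
  ext r s
  rw [Matrix.of_apply, qsT, dif_pos (by omega), pow_add, Matrix.mul_apply, Matrix.mul_apply]
  have hinj : Function.Injective (Fin.castLE h) := Fin.castLE_injective h
  rw [← Finset.sum_subset (Finset.subset_univ (Finset.univ.map ⟨Fin.castLE h, hinj⟩)),
    Finset.sum_map]
  · apply Finset.sum_congr rfl
    intro j _
    simp only [U, Matrix.of_apply, Matrix.submatrix_apply, qsT]
    rw [dif_pos (by omega)]
    rfl
  · intro x _ hx
    have hxi : i ≤ (x : ℕ) := by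
      by_contra hc
      apply hx
      simp only [Finset.mem_map, Finset.mem_univ, true_and]
      exact ⟨⟨x, by omega⟩, rfl⟩
    have h0 := qsT_tri a ha (s : ℕ) x x.2 (by omega)
    rw [if_neg (by omega), qsT, dif_pos x.2] at h0
    rw [h0, mul_zero]

lemma qs_theta {n : ℕ} {R : Type*} [CommRing R]
    (a : Matrix (Fin (n + 1)) (Fin (n + 1)) R) (ha : IsSteinbergA a) (i k : ℕ) (h : i ≤ n + 1) :
    theta a i k = qsD i (fun r s => qsT a (k + s) r) := by
  unfold theta
  split_ifs with h1
  · rcases h1 with rfl | rfl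
    · simp [qsD]
    · rw [← qs_lead a ha _ _ le_rfl]
      have : (a ^ k).submatrix (Fin.castLE (le_refl (n + 1))) (Fin.castLE le_rfl) = a ^ k := rfl
      rw [this, Matrix.det_pow, qs_det a ha, one_pow]
  · exact qs_lead a ha _ _ h

lemma qsD_congr {R : Type*} [CommRing R] (m : ℕ) (f g : ℕ → ℕ → R)
    (h : ∀ r s, r < m → s < m → f r s = g r s) : qsD m f = qsD m g := by
  unfold qsD
  congr 1
  ext r s
  exact h _ _ r.2 s.2

/-- for `a ∈ A(R)`, `1 ≤ i ≤ n−1` and `k ≥ 1`, the Q-system relation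
`θ_{i,k}² = θ_{i,k−1}·θ_{i,k+1} + θ_{i−1,k}·θ_{i+1,k}` holds. -/
theorem stmt_4 (n : ℕ) (hn : 2 ≤ n) (R : Type*) [CommRing R]
    (a : Matrix (Fin n) (Fin n) R) (ha : IsSteinbergA a)
    (i k : ℕ) (hi1 : 1 ≤ i) (hi2 : i ≤ n - 1) (hk : 1 ≤ k) :
    theta a i k ^ 2 =
      theta a i (k - 1) * theta a i (k + 1) + theta a (i - 1) k * theta a (i + 1) k := by
  obtain ⟨n, rfl⟩ : ∃ q, n = q + 1 := ⟨n - 1, by omega⟩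
  obtain ⟨i, rfl⟩ : ∃ q, i = q + 1 := ⟨i - 1, by omega⟩
  obtain ⟨k, rfl⟩ : ∃ q, k = q + 1 := ⟨k - 1, by omega⟩
  simp only [Nat.add_sub_cancel] at hi2 ⊢
  rw [qs_theta a ha _ _ (by omega), qs_theta a ha _ _ (by omega), qs_theta a ha _ _ (by omega),
    qs_theta a ha _ _ (by omega), qs_theta a ha _ _ (by omega)]
  have h := qsD_dodgson i (fun r s => qsT a (k + 1 + s) r)
  have e : ∀ m, m ≤ n → qsD m (fun r s => qsT a (k + 1 + (s + 1)) (r + 1)) =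
      qsD m (fun r s => qsT a (k + 1 + s) r) := fun m hm => qsD_congr _ _ _ fun r s hr _ => by
    rw [← add_assoc, qsT_shift a ha _ _ (by omega)]
  have e1 : qsD (i + 1) (fun r s => qsT a (k + 1 + s) (r + 1)) =
      qsD (i + 1) (fun r s => qsT a (k + s) r) := qsD_congr _ _ _ fun r s hr _ => by
    rw [add_right_comm, qsT_shift a ha _ _ (by omega)]
  have e2 : qsD (i + 1) (fun r s => qsT a (k + 1 + (s + 1)) r) =
      qsD (i + 1) (fun r s => qsT a (k + 1 + 1 + s) r) := qsD_congr _ _ _ fun r s hr _ => by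
    congr 1; omega
  rw [e _ (by omega), e _ (by omega), e1, e2] at h
  linear_combination -h
end

section
/- Let R be a commutative ring and let g : ℤ → SL(n, R) be an (SL(n), c)-band over R. For s ∈ ℤ, 1 ≤ i ≤ n−1 and k ≥ 0, let θ^{(s)}_{i,k} ∈ R denote the determinant of the top-left i×i submatrix of g(s)·g(s+k)⁻¹, and set by convention θ^{(s)}_{0,k} := 1 and θ^{(s)}_{n,k} := 1 (note θ^{(s)}_{i,0} = 1). Then for all s ∈ ℤ, 1 ≤ i ≤ n−1 and k ≥ 1 the T-system relation holds: θ^{(s)}_{i,k}·θ^{(s+1)}_{i,k} = θ^{(s)}_{i,k+1}·θ^{(s+1)}_{i,k−1} + θ^{(s+1)}_{i−1,k}·θ^{(s)}_{i+1,k}. -/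
/-- `θ^{(s)}_{i,k}`: the determinant of the top-left `i × i` submatrix of
`g(s)·g(s+k)⁻¹`, with the conventions `θ^{(s)}_{0,k} = 1` and `θ^{(s)}_{n,k} = 1`. -/
noncomputable def thetaBand {n : ℕ} {R : Type*} [CommRing R]
    (g : ℤ → Matrix.SpecialLinearGroup (Fin n) R) (s : ℤ) (i k : ℕ) : R :=
  if i = 0 ∨ i = n then 1
  else if h : i ≤ n then
    (((g s * (g (s + (k : ℤ)))⁻¹ : Matrix.SpecialLinearGroup (Fin n) R) :
        Matrix (Fin n) (Fin n) R).submatrix (Fin.castLE h) (Fin.castLE h)).det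
  else 0

open Matrix

theorem aux_perm {n a b : ℕ} (hab : a ≤ b) (hb : b < n) :
    ∃ σ : Equiv.Perm (Fin n), ∀ j : Fin n,
      ((σ j : Fin n) : ℕ) = if (j : ℕ) = b then a else
        if a ≤ (j : ℕ) ∧ (j : ℕ) < b then (j : ℕ) + 1 else j := by
  have : NeZero n := ⟨by omega⟩
  refine ⟨Fin.cycleIcc ⟨a, by omega⟩ ⟨b, hb⟩, fun j => ?_⟩
  rcases lt_or_ge (j : ℕ) a with h | h
  · rw [Fin.cycleIcc_of_lt (by simpa [Fin.lt_def] using h)]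
    split_ifs <;> omega
  · rcases lt_or_ge b (j : ℕ) with h' | h'
    · rw [Fin.cycleIcc_of_gt (by simpa [Fin.lt_def] using h')]
      split_ifs <;> omega
    · rw [Fin.cycleIcc_of_le_of_le (by simpa [Fin.le_def] using h)
        (by simpa [Fin.le_def] using h')]
      by_cases hj : (j : ℕ) = b
      · have : j = ⟨b, hb⟩ := Fin.ext hj
        simp [this]
      · have : j ≠ ⟨b, hb⟩ := fun e => hj (by simp [e])
        rw [if_neg this, if_neg hj, if_pos (by omega)]
        rw [Fin.val_add_one_of_lt']
        omega

theorem aux_plucker {m : Type*} [Fintype m] [DecidableEq m] {R : Type*} [CommRing R]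
    (B : Matrix m m R) (z p : m) (hzp : z ≠ p) (a b c d : m → R) :
    ((B.updateRow p c).updateRow z a).det * ((B.updateRow p d).updateRow z b).det =
    ((B.updateRow p d).updateRow z a).det * ((B.updateRow p c).updateRow z b).det +
    ((B.updateRow p d).updateRow z c).det * ((B.updateRow p b).updateRow z a).det := by
  set M := (B.updateRow p b).updateRow z a with hM
  set N := B.updateRow p d with hN
  have h1 : Mᵀ *ᵥ cramer Mᵀ c = M.det • c := by
    rw [mulVec_cramer, det_transpose]
  have h2 : ∑ j, cramer Mᵀ c j • M j = M.det • c := by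
    rw [← h1]
    ext t
    simp [mulVec, dotProduct, Finset.sum_apply, mul_comm]
  have h3 := congrArg (fun w => cramer Nᵀ w z) h2
  simp only [map_sum, map_smul, Finset.sum_apply, Pi.smul_apply, smul_eq_mul] at h3
  rw [Finset.sum_eq_add z p hzp ?_ (by simp) (by simp)] at h3
  · simp only [cramer_transpose_apply] at h3
    have e1 : M z = a := by simp [hM]
    have e2 : M p = b := by simp [hM, hzp.symm]
    have e3 : M.updateRow z c = (B.updateRow p b).updateRow z c := by simp [hM]
    have e4 : M.updateRow p c = (B.updateRow p c).updateRow z a := by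
      rw [hM, updateRow_comm _ hzp, updateRow_idem]
    have e5 : ((B.updateRow p b).updateRow z c).det = - ((B.updateRow p c).updateRow z b).det := by
      rw [← det_transpose, ← neg_eq_iff_eq_neg, ← neg_one_mul]
      have := det_permute (Equiv.swap z p) ((B.updateRow p b).updateRow z c)
      rw [Equiv.Perm.sign_swap hzp] at this
      rw [det_transpose]
      have e : ((B.updateRow p b).updateRow z c).submatrix (Equiv.swap z p) id =
          (B.updateRow p c).updateRow z b := by
        ext r t
        rcases eq_or_ne r z with rfl | hr
        · simp [hzp.symm]
        · rcases eq_or_ne r p with rfl | hr'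
          · simp [hzp.symm]
          · simp [Equiv.swap_apply_of_ne_of_ne hr hr', hr, hr']
      rw [e] at this
      rw [this]; simp
    rw [e1, e2, e3, e4, e5] at h3
    linear_combination h3
  · rintro j - ⟨hj1, hj2⟩
    have : M j = N j := by
      ext t; simp [hM, hN, hj1, hj2]
    rw [this, cramer_transpose_row_self]
    simp [Ne.symm hj1]

/-- The rows of a band. -/
theorem aux_rows {n : ℕ} (hn : 0 < n) {R : Type*} [CommRing R]
    (g : ℤ → Matrix.SpecialLinearGroup (Fin n) R)
    (hg : ∀ s : ℤ, IsSteinbergA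
      ((g s * (g (s + 1))⁻¹ : Matrix.SpecialLinearGroup (Fin n) R) : Matrix (Fin n) (Fin n) R)) :
    ∀ (j : ℕ) (hj : j < n) (s : ℤ), (g s).1 ⟨j, hj⟩ = (g (s + j)).1 ⟨0, hn⟩ := by
  intro j
  induction j with
  | zero => intro hj s; simp
  | succ j ih =>
    intro hj s
    have h : (g s).1 = ((g s * (g (s + 1))⁻¹ : Matrix.SpecialLinearGroup (Fin n) R) :
        Matrix (Fin n) (Fin n) R) * (g (s + 1)).1 := by
      have : g s = (g s * (g (s + 1))⁻¹) * g (s + 1) := by group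
      exact congrArg Subtype.val this
    have h2 : (g s).1 ⟨j + 1, hj⟩ = (g (s + 1)).1 ⟨j, by omega⟩ := by
      ext t
      rw [h, Matrix.mul_apply, Finset.sum_eq_single ⟨j, by omega⟩]
      · rw [(hg s).2.1 _ _ rfl, one_mul]
      · intro b _ hb
        rw [(hg s).2.2 _ _ (by simp) (fun e => hb (Fin.ext (by simp at e ⊢; omega))), zero_mul]
      · simp
    rw [h2, ih, show s + 1 + (j : ℤ) = s + ((j + 1 : ℕ) : ℤ) by push_cast; ring]

theorem aux_theta {n : ℕ} (hn : 0 < n) {R : Type*} [CommRing R]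
    (g : ℤ → Matrix.SpecialLinearGroup (Fin n) R)
    (hg : ∀ s : ℤ, IsSteinbergA
      ((g s * (g (s + 1))⁻¹ : Matrix.SpecialLinearGroup (Fin n) R) : Matrix (Fin n) (Fin n) R))
    (s : ℤ) (i k : ℕ) (hi : i ≤ n) :
    thetaBand g s i k = (Matrix.of fun j : Fin n =>
      (g (if (j : ℕ) < i then s + j else s + k + j)).1 ⟨0, hn⟩).det := by
  have hr := aux_rows hn g hg
  set W : Matrix (Fin n) (Fin n) R := Matrix.of fun j : Fin n =>
      (g (if (j : ℕ) < i then s + j else s + k + j)).1 ⟨0, hn⟩ with hW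
  have W1 : ∀ j : Fin n, (j : ℕ) < i → W j = (g s).1 j := by
    intro j hj
    rw [show (g s).1 j = _ from hr j j.2 s]
    ext t
    simp [hW, hj]
  have W2 : ∀ j : Fin n, ¬ (j : ℕ) < i → W j = (g (s + k)).1 j := by
    intro j hj
    rw [show (g (s + k)).1 j = _ from hr j j.2 _]
    ext t
    simp [hW, hj]
  set T : Matrix (Fin n) (Fin n) R :=
    ((g s * (g (s + (k : ℤ)))⁻¹ : Matrix.SpecialLinearGroup (Fin n) R) :
        Matrix (Fin n) (Fin n) R) with hT
  have hTg : (g s).1 = T * (g (s + k)).1 := by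
    have : g s = (g s * (g (s + k))⁻¹) * g (s + k) := by group
    exact congrArg Subtype.val this
  set N : Matrix (Fin n) (Fin n) R := Matrix.of fun j : Fin n =>
    if (j : ℕ) < i then T j else (1 : Matrix (Fin n) (Fin n) R) j with hN
  have hWN : W = N * (g (s + k)).1 := by
    funext j
    by_cases hj : (j : ℕ) < i
    · rw [W1 j hj, hTg]
      ext t; simp [Matrix.mul_apply, hN, hj]
    · rw [W2 j hj]
      conv_lhs => rw [← Matrix.one_mul (g (s + k)).1]
      ext t; rw [Matrix.mul_apply, Matrix.mul_apply]; simp [hN, hj]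
  have hdet : W.det = N.det := by
    rw [hWN, Matrix.det_mul, (g (s + k)).2, mul_one]
  have hNd : N.det = (T.submatrix (Fin.castLE hi) (Fin.castLE hi)).det := by
    rw [twoBlockTriangular_det N (fun j : Fin n => (j : ℕ) < i)]
    · have e2 : N.toSquareBlockProp (fun j : Fin n => ¬ (j : ℕ) < i) = 1 := by
        ext ⟨a, ha⟩ ⟨b, hb⟩
        simp [toSquareBlockProp, hN, ha, Matrix.one_apply]
      rw [e2, det_one, mul_one, ← det_submatrix_equiv_self (Fin.castLEquiv hi)]
      congr 1
      ext a b
      simp [toSquareBlockProp, hN, Fin.castLEquiv]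
    · intro a ha b hb
      simp only [hN, Matrix.of_apply, if_neg ha]
      exact Matrix.one_apply_ne (fun e => ha (e ▸ hb))
  rw [hdet, hNd]
  unfold thetaBand
  split_ifs with h
  · rcases h with rfl | rfl
    · simp
    · have : T.submatrix (Fin.castLE hi) (Fin.castLE hi) = T := by ext a b; simp
      rw [this]
      exact ((g s * (g (s + (k : ℤ)))⁻¹).2).symm
  · rfl

set_option maxHeartbeats 1000000 in
/-- for an `(SL(n), c)`-band `g` over `R`, all `s ∈ ℤ`, `1 ≤ i ≤ n−1` and `k ≥ 1`,
the T-system relation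
`θ^{(s)}_{i,k}·θ^{(s+1)}_{i,k} = θ^{(s)}_{i,k+1}·θ^{(s+1)}_{i,k−1} + θ^{(s+1)}_{i−1,k}·θ^{(s)}_{i+1,k}`
holds. -/
theorem stmt_5 (n : ℕ) (hn : 2 ≤ n) (R : Type*) [CommRing R]
    (g : ℤ → Matrix.SpecialLinearGroup (Fin n) R)
    (hg : ∀ s : ℤ, IsSteinbergA
      ((g s * (g (s + 1))⁻¹ : Matrix.SpecialLinearGroup (Fin n) R) : Matrix (Fin n) (Fin n) R))
    (s : ℤ) (i k : ℕ) (hi1 : 1 ≤ i) (hi2 : i ≤ n - 1) (hk : 1 ≤ k) :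
    thetaBand g s i k * thetaBand g (s + 1) i k =
      thetaBand g s i (k + 1) * thetaBand g (s + 1) i (k - 1) +
        thetaBand g (s + 1) (i - 1) k * thetaBand g s (i + 1) k := by
  have hn0 : 0 < n := by omega
  have hin : i < n := by omega
  obtain ⟨m, rfl⟩ : ∃ m, k = m + 1 := ⟨k - 1, by omega⟩
  obtain ⟨l, rfl⟩ : ∃ l, i = l + 1 := ⟨i - 1, by omega⟩
  simp only [Nat.add_sub_cancel]
  rw [aux_theta hn0 g hg s _ _ (by omega), aux_theta hn0 g hg (s + 1) _ _ (by omega),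
    aux_theta hn0 g hg s _ _ (by omega), aux_theta hn0 g hg (s + 1) _ _ (by omega),
    aux_theta hn0 g hg (s + 1) _ _ (by omega), aux_theta hn0 g hg s _ _ (by omega)]
  obtain ⟨σ, hσ⟩ := aux_perm (n := n) (Nat.zero_le l) (by omega)
  obtain ⟨τ, hτ⟩ := aux_perm (n := n) (a := l + 1) (b := n - 1) (by omega) (by omega)
  set v : ℤ → Fin n → R := fun t => (g t).1 ⟨0, hn0⟩ with hv
  set B : Matrix (Fin n) (Fin n) R := Matrix.of fun j : Fin n =>
    v (if (j : ℕ) < l + 1 then s + j else s + ((m + 1 : ℕ) : ℤ) + j) with hB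
  set z : Fin n := ⟨0, hn0⟩ with hz
  set p : Fin n := ⟨l + 1, hin⟩ with hp
  have hzp : z ≠ p := by simp [hz, hp, Fin.ext_iff]
  have key : ∀ (ρ : Equiv.Perm (Fin n)) (x y : ℤ) (f : Fin n → ℤ),
      (∀ j : Fin n, f j = if (ρ j : ℕ) = 0 then x else if (ρ j : ℕ) = l + 1 then y else
        if (ρ j : ℕ) < l + 1 then s + (ρ j : ℕ) else s + ((m + 1 : ℕ) : ℤ) + (ρ j : ℕ)) →
      (Matrix.of fun j : Fin n => v (f j)).det =
        (Equiv.Perm.sign ρ : ℤ) * ((B.updateRow p (v y)).updateRow z (v x)).det := by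
    intro ρ x y f hf
    rw [← det_permute]
    congr 1
    funext j
    have h0 : (ρ j : ℕ) = 0 ↔ ρ j = z := by simp [hz, Fin.ext_iff]
    have h1 : (ρ j : ℕ) = l + 1 ↔ ρ j = p := by simp [hp, Fin.ext_iff]
    ext t
    simp only [Matrix.of_apply, hf, Matrix.submatrix_apply, id, Matrix.updateRow_apply, h0, h1, hB]
    split_ifs <;> rfl
  have P := aux_plucker B z p hzp (v s) (v (s + (l + 1 : ℕ)))
    (v (s + (m + 1 : ℕ) + (l + 1 : ℕ))) (v (s + (m + 1 : ℕ) + n))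
  have K1 := key (1) (s) (s + (m + 1 : ℕ) + (l + 1 : ℕ))
    (fun j : Fin n => if (j : ℕ) < l + 1 then s + j else s + ((m + 1 : ℕ) : ℤ) + j) (by
      intro j
      have hj := j.2
      simp only [Equiv.Perm.one_apply]
      split_ifs <;> omega)
  have K2 := key (τ * σ) (s + (l + 1 : ℕ)) (s + (m + 1 : ℕ) + n)
    (fun j : Fin n => if (j : ℕ) < l + 1 then (s + 1) + j else (s + 1) + ((m + 1 : ℕ) : ℤ) + j) (by
      intro j
      have hj := j.2
      have h1 := hσ j
      have h2 := hτ (σ j)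
      simp only [Equiv.Perm.mul_apply]
      split_ifs at h1 <;> split_ifs at h2 <;> split_ifs <;> omega)
  have K3 := key (τ) (s) (s + (m + 1 : ℕ) + n)
    (fun j : Fin n => if (j : ℕ) < l + 1 then s + j else s + ((m + 1 + 1 : ℕ) : ℤ) + j) (by
      intro j
      have hj := j.2
      have h1 := hτ j
      generalize (τ j : ℕ) = x at *
      split_ifs at h1 <;> split_ifs <;> omega)
  have K4 := key (σ) (s + (l + 1 : ℕ)) (s + (m + 1 : ℕ) + (l + 1 : ℕ))
    (fun j : Fin n => if (j : ℕ) < l + 1 then (s + 1) + j else (s + 1) + ((m : ℕ) : ℤ) + j) (by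
      intro j
      have hj := j.2
      have h1 := hσ j
      generalize (σ j : ℕ) = x at *
      split_ifs at h1 <;> split_ifs <;> omega)
  have K5 := key (τ * σ) (s + (m + 1 : ℕ) + (l + 1 : ℕ)) (s + (m + 1 : ℕ) + n)
    (fun j : Fin n => if (j : ℕ) < l then (s + 1) + j else (s + 1) + ((m + 1 : ℕ) : ℤ) + j) (by
      intro j
      have hj := j.2
      have h1 := hσ j
      have h2 := hτ (σ j)
      simp only [Equiv.Perm.mul_apply]
      split_ifs at h1 <;> split_ifs at h2 <;> split_ifs <;> omega)
  have K6 := key (1) (s) (s + (l + 1 : ℕ))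
    (fun j : Fin n => if (j : ℕ) < l + 1 + 1 then s + j else s + ((m + 1 : ℕ) : ℤ) + j) (by
      intro j
      have hj := j.2
      simp only [Equiv.Perm.one_apply]
      split_ifs <;> omega)
  rw [K1, K2, K3, K4, K5, K6]
  simp only [Equiv.Perm.sign_mul, Equiv.Perm.sign_one, Units.val_mul, Units.val_one,
      Int.cast_mul, Int.cast_one]
  linear_combination ((Equiv.Perm.sign τ : ℤ) : R) * ((Equiv.Perm.sign σ : ℤ) : R) * P
end

section
/- Let R be a commutative ring and g, h ∈ SL(n, R). Then g·h⁻¹ ∈ A(R) if and only if the last n−1 rows of g coincide with the first n−1 rows of h, i.e., g_{i+1,j} = h_{i,j} for all 1 ≤ i ≤ n−1 and 1 ≤ j ≤ n. -/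
/-- for `g, h ∈ SL(n, R)`, one has `g·h⁻¹ ∈ A(R)` if and only if the last `n−1`
rows of `g` coincide with the first `n−1` rows of `h`. -/
theorem stmt_6 (n : ℕ) (hn : 2 ≤ n) (R : Type*) [CommRing R]
    (g h : Matrix.SpecialLinearGroup (Fin n) R) :
    IsSteinbergA
      ((g * h⁻¹ : Matrix.SpecialLinearGroup (Fin n) R) : Matrix (Fin n) (Fin n) R) ↔
    ∀ i i' j : Fin n, (i' : ℕ) = (i : ℕ) + 1 →
      (g : Matrix (Fin n) (Fin n) R) i' j = (h : Matrix (Fin n) (Fin n) R) i j := by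
  obtain ⟨k, rfl⟩ : ∃ k, n = k + 1 := ⟨n - 1, by omega⟩
  obtain ⟨m, rfl⟩ : ∃ m, g = m * h := ⟨g * h⁻¹, by simp⟩
  rw [mul_inv_cancel_right]
  constructor
  · rintro ⟨-, h2, h3⟩ i i' j hi
    rw [Matrix.SpecialLinearGroup.coe_mul, Matrix.mul_apply, Finset.sum_eq_single i]
    · rw [h2 i' i hi, one_mul]
    · intro b _ hb
      rw [h3 i' b (by omega) (fun h => hb (Fin.ext (by omega))), zero_mul]
    · simp
  · intro H
    have key : ∀ i i' l : Fin (k + 1), (i' : ℕ) = (i : ℕ) + 1 →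
        (m : Matrix (Fin (k + 1)) (Fin (k + 1)) R) i' l =
          (1 : Matrix (Fin (k + 1)) (Fin (k + 1)) R) i l := by
      intro i i' l hi
      have e1 : (m : Matrix (Fin (k + 1)) (Fin (k + 1)) R) =
          ((m * h * h⁻¹ : Matrix.SpecialLinearGroup (Fin (k + 1)) R) :
            Matrix (Fin (k + 1)) (Fin (k + 1)) R) := by rw [mul_inv_cancel_right]
      have e2 : (1 : Matrix (Fin (k + 1)) (Fin (k + 1)) R) =
          ((h * h⁻¹ : Matrix.SpecialLinearGroup (Fin (k + 1)) R) :
            Matrix (Fin (k + 1)) (Fin (k + 1)) R) := by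
        rw [mul_inv_cancel, Matrix.SpecialLinearGroup.coe_one]
      rw [e1, e2, Matrix.SpecialLinearGroup.coe_mul (m * h) h⁻¹,
        Matrix.SpecialLinearGroup.coe_mul h h⁻¹, Matrix.mul_apply, Matrix.mul_apply]
      exact Finset.sum_congr rfl fun j _ => by rw [H i i' j hi]
    refine ⟨?_, ?_, ?_⟩
    · intro i j hi hj
      obtain rfl : i = 0 := Fin.ext hi
      obtain rfl : j = Fin.last k := Fin.ext (by simpa using hj)
      have hd := m.det_coe
      rw [Matrix.det_succ_column _ (Fin.last k), Finset.sum_eq_single 0] at hd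
      · have hs : (m : Matrix (Fin (k + 1)) (Fin (k + 1)) R).submatrix
            (Fin.succAbove 0) (Fin.last k).succAbove = 1 := by
          ext a b
          rw [Matrix.submatrix_apply, Fin.succAbove_zero, Fin.succAbove_last,
            key a.castSucc a.succ _ (by simp)]
          simp [Matrix.one_apply]
        rw [hs, Matrix.det_one, mul_one] at hd
        simp only [Fin.val_zero, Fin.val_last, zero_add] at hd
        have hsq : ((-1 : R) ^ k) * (-1) ^ k = 1 := by
          rw [← mul_pow]; simp
        rw [Nat.add_sub_cancel]
        linear_combination (-1 : R) ^ k * hd - (m : Matrix (Fin (k + 1)) (Fin (k + 1)) R) 0 (Fin.last k) * hsq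
      · intro b _ hb
        have hb' : (b : ℕ) ≠ 0 := fun h => hb (Fin.ext h)
        rw [key ⟨b - 1, by omega⟩ b _ (by simp; omega), Matrix.one_apply_ne]
        · simp
        · intro h
          have := congrArg Fin.val h
          simp at this
          omega
      · simp
    · intro i j hij
      rw [key j i j hij, Matrix.one_apply_eq]
    · intro i j hi hij
      rw [key ⟨i - 1, by omega⟩ i j (by simp; omega), Matrix.one_apply_ne]
      intro h
      have := congrArg Fin.val h
      simp at this
      omega
end

section
/- Let R be a commutative ring. For a doubly infinite array B = (b_{i,j}) with i ∈ ℤ and 1 ≤ j ≤ n and entries in R, and for s ∈ ℤ, let B(s) denote the n×n matrix whose rows are the rows s, s+1, …, s+n−1 of B. Then the assignment B ↦ (B(s))_{s∈ℤ} is a bijection from the set of arrays B over R satisfying det B(s) = 1 for every s ∈ ℤ onto the set of (SL(n), c)-bands over R. -/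
/-- The assignment `B ↦ (B(s))_{s ∈ ℤ}` sending a doubly infinite `ℤ × n` array all of whose
`n × n` windows of consecutive rows have determinant `1` to the corresponding sequence of
elements of `SL(n, R)`. -/
def arrayToSeq (n : ℕ) (R : Type*) [CommRing R]
    (B : {B : ℤ → Fin n → R //
      ∀ s : ℤ, (Matrix.of fun i j : Fin n => B (s + (i : ℕ)) j).det = 1}) :
    ℤ → Matrix.SpecialLinearGroup (Fin n) R :=
  fun s => ⟨Matrix.of fun i j : Fin n => B.1 (s + (i : ℕ)) j, B.2 s⟩

theorem steinberg_corner {m : ℕ} {R : Type*} [CommRing R]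
    (M : Matrix (Fin (m + 1)) (Fin (m + 1)) R) (hdet : M.det = 1)
    (h : ∀ (i : Fin m) (j : Fin (m + 1)),
      M i.succ j = (1 : Matrix (Fin (m + 1)) (Fin (m + 1)) R) i.castSucc j) :
    IsSteinbergA M := by
  refine ⟨?_, ?_, ?_⟩
  · intro i j hi hj
    obtain rfl : i = 0 := Fin.ext hi
    obtain rfl : j = Fin.last m := Fin.ext (by simpa using hj)
    rw [Matrix.det_succ_column M (Fin.last m), Fin.sum_univ_succ] at hdet
    have h1 : M.submatrix (Fin.succAbove 0) (Fin.last m).succAbove = 1 := by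
      ext a b
      simp [h, Matrix.one_apply]
    have h2 : ∀ i : Fin m, M i.succ (Fin.last m) = 0 := by
      intro i
      rw [h, Matrix.one_apply_ne]
      exact (Fin.castSucc_lt_last i).ne
    rw [h1] at hdet
    simp only [h2, Matrix.det_one] at hdet
    simp at hdet
    have h3 : ((-1 : R) ^ m) * (-1) ^ m = 1 := by
      rw [← mul_pow]; simp
    simp only [Nat.add_sub_cancel]
    linear_combination ((-1 : R) ^ m) * hdet - M 0 (Fin.last m) * h3
  · intro i j hij
    induction i using Fin.cases with
    | zero => simp at hij
    | succ i =>
      rw [h]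
      have : i.castSucc = j := Fin.ext (by simpa using hij)
      rw [this, Matrix.one_apply_eq]
  · intro i j hi hij
    induction i using Fin.cases with
    | zero => simp at hi
    | succ i =>
      rw [h, Matrix.one_apply_ne]
      intro e
      apply hij
      simp [← e]

theorem steinberg_row {m : ℕ} {R : Type*} [CommRing R]
    (M : Matrix (Fin (m + 1)) (Fin (m + 1)) R) (hM : IsSteinbergA M)
    (i : Fin m) (j : Fin (m + 1)) :
    M i.succ j = (1 : Matrix (Fin (m + 1)) (Fin (m + 1)) R) i.castSucc j := by
  by_cases hj : i.castSucc = j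
  · subst hj
    rw [Matrix.one_apply_eq]
    exact hM.2.1 _ _ (by simp)
  · rw [Matrix.one_apply_ne hj]
    refine hM.2.2 _ _ (by simp) ?_
    intro e
    exact hj (Fin.ext (by simpa using e))

theorem stmt_7 (n : ℕ) (hn : 2 ≤ n) (R : Type*) [CommRing R] :
    Function.Injective (arrayToSeq n R) ∧
    Set.range (arrayToSeq n R) =
      {g : ℤ → Matrix.SpecialLinearGroup (Fin n) R | ∀ s : ℤ,
        IsSteinbergA
          ((g s * (g (s + 1))⁻¹ : Matrix.SpecialLinearGroup (Fin n) R) :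
            Matrix (Fin n) (Fin n) R)} := by
  obtain ⟨m, rfl⟩ : ∃ m, n = m + 1 := ⟨n - 1, by omega⟩
  constructor
  · intro B C h
    apply Subtype.ext
    funext s j
    have := congrArg (fun g : ℤ → Matrix.SpecialLinearGroup (Fin (m + 1)) R =>
      (g s : Matrix (Fin (m + 1)) (Fin (m + 1)) R) 0 j) h
    simpa [arrayToSeq] using this
  · ext g
    constructor
    · rintro ⟨B, rfl⟩ s
      apply steinberg_corner _ (Matrix.SpecialLinearGroup.det_coe _)
      intro i j
      have h1 := Matrix.SpecialLinearGroup.coe_mul (arrayToSeq (m + 1) R B (s + 1))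
        (arrayToSeq (m + 1) R B (s + 1))⁻¹
      rw [mul_inv_cancel, Matrix.SpecialLinearGroup.coe_one] at h1
      rw [h1, Matrix.SpecialLinearGroup.coe_mul, Matrix.mul_apply, Matrix.mul_apply]
      refine Finset.sum_congr rfl fun k _ => ?_
      congr 1
      change B.1 (s + ((i.succ : Fin (m + 1)) : ℕ)) k = B.1 (s + 1 + ((i.castSucc : Fin (m + 1)) : ℕ)) k
      have e : s + (((i.succ : Fin (m + 1)) : ℕ) : ℤ) =
          s + 1 + (((i.castSucc : Fin (m + 1)) : ℕ) : ℤ) := by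
        rw [Fin.val_succ, Fin.val_castSucc]
        push_cast
        ring
      rw [e]
    · intro hg
      have step : ∀ (s : ℤ) (i : Fin m) (k : Fin (m + 1)),
          (g s : Matrix (Fin (m + 1)) (Fin (m + 1)) R) i.succ k =
          (g (s + 1) : Matrix (Fin (m + 1)) (Fin (m + 1)) R) i.castSucc k := by
        intro s i k
        have h1 : g s = (g s * (g (s + 1))⁻¹) * g (s + 1) := by group
        have h2 := steinberg_row _ (hg s) i
        rw [h1, Matrix.SpecialLinearGroup.coe_mul, Matrix.mul_apply]
        simp only [h2]
        rw [← Matrix.mul_apply, Matrix.one_mul]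
      have key : ∀ (a : ℕ) (ha : a < m + 1) (s : ℤ) (k : Fin (m + 1)),
          (g (s + a) : Matrix (Fin (m + 1)) (Fin (m + 1)) R) 0 k =
          (g s : Matrix (Fin (m + 1)) (Fin (m + 1)) R) ⟨a, ha⟩ k := by
        intro a
        induction a with
        | zero => intro ha s k; simp
        | succ a ih =>
          intro ha s k
          have h1 := step s ⟨a, by omega⟩ k
          have h2 := ih (by omega) (s + 1) k
          have e : s + ((a + 1 : ℕ) : ℤ) = s + 1 + a := by push_cast; ring
          rw [e, h2]
          exact h1.symm
      have hmat : ∀ s : ℤ, (Matrix.of fun i j : Fin (m + 1) =>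
          (g (s + (i : ℕ)) : Matrix (Fin (m + 1)) (Fin (m + 1)) R) 0 j) = (g s).1 := by
        intro s
        ext i j
        exact key i i.2 s j
      refine ⟨⟨fun t j => (g t : Matrix (Fin (m + 1)) (Fin (m + 1)) R) 0 j, fun s => ?_⟩, ?_⟩
      · rw [hmat s]; exact (g s).2
      · funext s
        exact Subtype.ext (hmat s)
end

section
/- Let R be a commutative ring. The multiplication map A(R) × U(R) → M(R), (a, u) ↦ a·u, is a bijection: every m ∈ M(R) factors uniquely as m = a·u with a ∈ A(R) and u ∈ U(R). -/
/-- Upper unitriangular `n × n` matrices: the group `U(R)`. -/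
def IsUniUpper {n : ℕ} {R : Type*} [CommRing R] (u : Matrix (Fin n) (Fin n) R) : Prop :=
  (∀ i : Fin n, u i i = 1) ∧ ∀ i j : Fin n, (j : ℕ) < (i : ℕ) → u i j = 0

/-- The `R`-points of the double coset `M = U·c̄·U` of `SL(n)`: determinant `1`, subdiagonal
entries `1`, and all entries below the subdiagonal `0`. -/
def IsSteinbergM {n : ℕ} {R : Type*} [CommRing R] (m : Matrix (Fin n) (Fin n) R) : Prop :=
  m.det = 1 ∧
  (∀ i j : Fin n, (i : ℕ) = (j : ℕ) + 1 → m i j = 1) ∧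
  (∀ i j : Fin n, (j : ℕ) + 1 < (i : ℕ) → m i j = 0)

lemma steinbergA_iff {k : ℕ} {R : Type*} [CommRing R]
    (a : Matrix (Fin (k+1)) (Fin (k+1)) R) :
    IsSteinbergA a ↔ a 0 (Fin.last k) = (-1) ^ k ∧
      ∀ (i : Fin k) (j : Fin (k+1)), a i.succ j = (1 : Matrix _ _ R) i.castSucc j := by
  constructor
  · rintro ⟨h1, h2, h3⟩
    refine ⟨by simpa using h1 0 (Fin.last k) (by simp) (by simp), fun i j => ?_⟩
    by_cases h : i.castSucc = j
    · subst h
      rw [Matrix.one_apply_eq]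
      exact h2 _ _ (by simp)
    · rw [Matrix.one_apply_ne h]
      refine h3 _ _ (by simp) ?_
      intro h'
      apply h
      ext
      simpa using h'
  · rintro ⟨h1, h2⟩
    refine ⟨?_, ?_, ?_⟩
    · intro i j hi hj
      have hi : i = 0 := Fin.ext hi
      have hj : j = Fin.last k := Fin.ext (by simpa using hj)
      subst hi hj
      simpa using h1
    · intro i j hij
      induction i using Fin.cases with
      | zero => simp at hij
      | succ i =>
        have : i.castSucc = j := Fin.ext (by simpa using hij)
        rw [h2, this, Matrix.one_apply_eq]
    · intro i j hi hij
      induction i using Fin.cases with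
      | zero => simp at hi
      | succ i =>
        rw [h2, Matrix.one_apply_ne]
        rintro rfl
        simp at hij

lemma steinbergA_det {k : ℕ} {R : Type*} [CommRing R]
    (a : Matrix (Fin (k+1)) (Fin (k+1)) R)
    (h : ∀ (i : Fin k) (j : Fin (k+1)), a i.succ j = (1 : Matrix _ _ R) i.castSucc j) :
    a.det = (-1) ^ k * a 0 (Fin.last k) := by
  rw [Matrix.det_succ_column a (Fin.last k), Fin.sum_univ_succ]
  have h1 : a.submatrix (Fin.succAbove 0) (Fin.last k).succAbove = 1 := by
    ext i j
    simp [h, Matrix.one_apply]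
  rw [h1, Finset.sum_eq_zero]
  · simp
  · intro i _
    rw [h, Matrix.one_apply_ne (Fin.castSucc_lt_last i).ne]
    simp

lemma uniUpper_det {n : ℕ} {R : Type*} [CommRing R] (u : Matrix (Fin n) (Fin n) R)
    (hu : IsUniUpper u) : u.det = 1 := by
  rw [Matrix.det_of_isUpperTriangular (fun i j hij => hu.2 i j hij)]
  simp [hu.1]

lemma mul_succ_row {k : ℕ} {R : Type*} [CommRing R]
    (a u : Matrix (Fin (k+1)) (Fin (k+1)) R)
    (h : ∀ (i : Fin k) (j : Fin (k+1)), a i.succ j = (1 : Matrix _ _ R) i.castSucc j)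
    (i : Fin k) (j : Fin (k+1)) : (a * u) i.succ j = u i.castSucc j := by
  rw [Matrix.mul_apply]
  simp only [h]
  rw [← Matrix.mul_apply, one_mul]

lemma uniUpper_last {k : ℕ} {R : Type*} [CommRing R]
    (u : Matrix (Fin (k+1)) (Fin (k+1)) R) (hu : IsUniUpper u) (j : Fin (k+1)) :
    u (Fin.last k) j = (1 : Matrix _ _ R) (Fin.last k) j := by
  by_cases h : Fin.last k = j
  · subst h
    rw [Matrix.one_apply_eq, hu.1]
  · rw [Matrix.one_apply_ne h]
    exact hu.2 _ _ (Fin.lt_last_iff_ne_last.2 (Ne.symm h))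

/-- the multiplication map `A(R) × U(R) → M(R)`, `(a, u) ↦ a·u`, is a bijection. -/
theorem stmt_8 (n : ℕ) (hn : 2 ≤ n) (R : Type*) [CommRing R] :
    Set.BijOn
      (fun p : Matrix (Fin n) (Fin n) R × Matrix (Fin n) (Fin n) R => p.1 * p.2)
      ({a | IsSteinbergA a} ×ˢ {u | IsUniUpper u})
      {m | IsSteinbergM m} := by
  obtain ⟨k, rfl⟩ : ∃ k, n = k + 1 := ⟨n - 1, by omega⟩
  have sgn : ((-1 : R) ^ k) * (-1) ^ k = 1 := by rw [← mul_pow]; simp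
  refine ⟨?_, ?_, ?_⟩
  · rintro ⟨a, u⟩ ⟨ha, hu⟩
    change IsSteinbergA a at ha
    change IsUniUpper u at hu
    change IsSteinbergM (a * u)
    obtain ⟨h1, h2⟩ := (steinbergA_iff a).1 ha
    refine ⟨?_, ?_, ?_⟩
    · rw [Matrix.det_mul, uniUpper_det u hu, steinbergA_det a h2, h1, sgn, one_mul]
    · intro i j hij
      induction i using Fin.cases with
      | zero => simp at hij
      | succ i =>
        have : i.castSucc = j := Fin.ext (by simpa using hij)
        rw [mul_succ_row a u h2, this, hu.1]
    · intro i j hij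
      induction i using Fin.cases with
      | zero => simp at hij
      | succ i =>
        rw [mul_succ_row a u h2]
        exact hu.2 _ _ (by simpa using hij)
  · rintro ⟨a, u⟩ ⟨ha, hu⟩ ⟨a', u'⟩ ⟨ha', hu'⟩ heq
    change IsSteinbergA a at ha
    change IsUniUpper u at hu
    change IsSteinbergA a' at ha'
    change IsUniUpper u' at hu'
    change a * u = a' * u' at heq
    have h2 := ((steinbergA_iff a).1 ha).2
    have h2' := ((steinbergA_iff a').1 ha').2
    have huu : u = u' := by
      ext i j
      induction i using Fin.lastCases with
      | last => rw [uniUpper_last u hu, uniUpper_last u' hu']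
      | cast i => rw [← mul_succ_row a u h2, heq, mul_succ_row a' u' h2']
    subst huu
    have hun : IsUnit u.det := by rw [uniUpper_det u hu]; exact isUnit_one
    have : a = a' := by
      rw [← Matrix.mul_nonsing_inv_cancel_right u a hun, heq,
        Matrix.mul_nonsing_inv_cancel_right u a' hun]
    rw [this]
  · intro m hm
    change IsSteinbergM m at hm
    obtain ⟨hd, hm1, hm0⟩ := hm
    let u : Matrix (Fin (k+1)) (Fin (k+1)) R := fun i j =>
      Fin.lastCases (motive := fun _ => R) ((1 : Matrix _ _ R) (Fin.last k) j)
        (fun i => m i.succ j) i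
    have ul : ∀ j, u (Fin.last k) j = (1 : Matrix _ _ R) (Fin.last k) j := fun j => by simp [u]
    have uc : ∀ (i : Fin k) j, u i.castSucc j = m i.succ j := fun i j => by simp [u]
    have hu : IsUniUpper u := by
      constructor
      · intro i
        induction i using Fin.lastCases with
        | last => rw [ul, Matrix.one_apply_eq]
        | cast i => rw [uc]; exact hm1 _ _ (by simp)
      · intro i j hij
        induction i using Fin.lastCases with
        | last =>
          rw [ul, Matrix.one_apply_ne]
          rintro rfl
          simp at hij
        | cast i => rw [uc]; exact hm0 _ _ (by simpa using hij)
    have hud := uniUpper_det u hu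
    have hun : IsUnit u.det := by rw [hud]; exact isUnit_one
    have hmul : m * u⁻¹ * u = m := Matrix.nonsing_inv_mul_cancel_right u m hun
    have h2 : ∀ (i : Fin k) (j : Fin (k+1)),
        (m * u⁻¹) i.succ j = (1 : Matrix _ _ R) i.castSucc j := by
      intro i j
      rw [Matrix.mul_apply]
      simp only [← uc]
      rw [← Matrix.mul_apply, Matrix.mul_nonsing_inv u hun]
    have hdet : (m * u⁻¹).det = 1 := by
      have := congrArg Matrix.det hmul
      rwa [Matrix.det_mul, hud, mul_one, hd] at this
    refine ⟨(m * u⁻¹, u), ⟨(steinbergA_iff _).2 ⟨?_, h2⟩, hu⟩, hmul⟩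
    rw [steinbergA_det _ h2] at hdet
    calc _ = ((-1 : R) ^ k * (-1) ^ k) * (m * u⁻¹) 0 (Fin.last k) := by rw [sgn, one_mul]
      _ = _ := by rw [mul_assoc, hdet, mul_one]
end

section
/- Let R be a commutative ℂ-algebra. The map U(R)^ℤ × A(R)^ℤ → M(R)^ℤ sending a pair of sequences (u, a) to the sequence s ↦ u(s)·a(s)·u(s+1)⁻¹ is a bijection. -/
namespace SteinbergAux

open Matrix

variable {N : ℕ} {R : Type*} [CommRing R]

lemma det_uni {n : ℕ} {u : Matrix (Fin n) (Fin n) R} (hu : IsUniUpper u) : u.det = 1 := by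
  rw [Matrix.det_of_isUpperTriangular]
  · simp [hu.1]
  · intro i j hij
    exact hu.2 i j hij

lemma mul_a_castSucc {u a : Matrix (Fin (N+1)) (Fin (N+1)) R} (ha : IsSteinbergA a)
    (i : Fin (N+1)) (j : Fin N) :
    (u * a) i j.castSucc = u i 0 * a 0 j.castSucc + u i j.succ := by
  rw [Matrix.mul_apply, Fin.sum_univ_succ]
  congr 1
  rw [Finset.sum_eq_single j]
  · rw [ha.2.1 j.succ j.castSucc (by simp), mul_one]
  · intro b _ hb
    rw [ha.2.2 b.succ j.castSucc (by simp) (by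
      intro h
      apply hb
      ext
      simpa using h), mul_zero]
  · simp

lemma mul_a_last {u a : Matrix (Fin (N+1)) (Fin (N+1)) R} (ha : IsSteinbergA a)
    (i : Fin (N+1)) :
    (u * a) i (Fin.last N) = u i 0 * (-1) ^ N := by
  rw [Matrix.mul_apply, Fin.sum_univ_succ]
  rw [Finset.sum_eq_zero]
  · rw [ha.1 0 (Fin.last N) (by simp) (by simp)]
    simp
  · intro b _
    rw [ha.2.2 b.succ (Fin.last N) (by simp) (by
      have := b.2
      simp
      omega), mul_zero]

lemma pow_sq (N : ℕ) : ((-1 : R)) ^ N * (-1) ^ N = 1 := by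
  rw [← mul_pow]; simp

lemma det_a {a : Matrix (Fin (N+1)) (Fin (N+1)) R} (ha : IsSteinbergA a) : a.det = 1 := by
  rw [Matrix.det_succ_column a (Fin.last N), Fin.sum_univ_succ, Finset.sum_eq_zero]
  · rw [ha.1 0 (Fin.last N) (by simp) (by simp)]
    have : a.submatrix (Fin.succAbove 0) (Fin.last N).succAbove = 1 := by
      ext i j
      simp only [Matrix.submatrix_apply, Fin.succAbove_last, Fin.succAbove_zero]
      by_cases h : i = j
      · subst h
        rw [ha.2.1 _ _ (by simp)]
        simp
      · rw [ha.2.2 _ _ (by simp) (by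
          intro h'
          apply h
          ext
          simpa using h')]
        simp [h]
    rw [this]
    simp [pow_sq]
  · intro b _
    rw [ha.2.2 b.succ (Fin.last N) (by simp) (by
      have := b.2
      simp
      omega)]
    simp

lemma mem_M {u a v m : Matrix (Fin (N+1)) (Fin (N+1)) R} (hu : IsUniUpper u)
    (ha : IsSteinbergA a) (hv : IsUniUpper v) (h : m * v = u * a) : IsSteinbergM m := by
  have hdet : m.det = 1 := by
    have := congrArg Matrix.det h
    simpa [det_uni hu, det_uni hv, det_a ha] using this
  have key : ∀ t : ℕ, ∀ j : Fin (N+1), (j : ℕ) = t → ∀ i : Fin (N+1), (j : ℕ) + 1 ≤ i →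
      m i j = if (i : ℕ) = j + 1 then 1 else 0 := by
    intro t
    induction t using Nat.strong_induction_on with
    | _ t ih =>
      intro j hj i hij
      have h1 : (m * v) i j = m i j := by
        rw [Matrix.mul_apply, Finset.sum_eq_single j]
        · rw [hv.1, mul_one]
        · intro k _ hk
          rcases lt_or_gt_of_ne (fun h => hk (Fin.ext h) : (k : ℕ) ≠ j) with hlt | hlt
          · rw [ih k (by omega) k rfl i (by omega), if_neg (by omega), zero_mul]
          · rw [hv.2 k j hlt, mul_zero]
        · simp
      rw [← h1, h]
      have hjN : (j : ℕ) < N := by have := i.2; omega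
      obtain ⟨j', rfl⟩ : ∃ j' : Fin N, j = j'.castSucc := ⟨⟨j, hjN⟩, rfl⟩
      rw [mul_a_castSucc ha, hu.2 i 0 (by rw [Fin.val_zero]; omega), zero_mul, zero_add]
      split_ifs with hc
      · have : i = j'.succ := Fin.ext (by simpa using hc)
        rw [this, hu.1]
      · exact hu.2 _ _ (by simp at *; omega)
  refine ⟨hdet, ?_, ?_⟩
  · intro i j hij
    rw [key j j rfl i (by omega), if_pos hij]
  · intro i j hij
    rw [key j j rfl i (by omega), if_neg (by omega)]

/-- Row `i+1` of `m x` when `x` vanishes from `i+1` on. -/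
lemma mulVec_row {m : Matrix (Fin (N+1)) (Fin (N+1)) R} (hm : IsSteinbergM m)
    (x : Fin (N+1) → R) (i : Fin N) (hx : ∀ k : Fin (N+1), (i : ℕ) < k → x k = 0) :
    (m *ᵥ x) i.succ = x i.castSucc := by
  rw [Matrix.mulVec, dotProduct, Finset.sum_eq_single i.castSucc]
  · rw [hm.2.1 _ _ (by simp), one_mul]
  · intro k _ hk
    rcases lt_or_gt_of_ne (fun h => hk (Fin.ext h) : (k : ℕ) ≠ i.castSucc) with hlt | hlt
    · rw [hm.2.2 i.succ k (by simp at *; omega), zero_mul]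
    · rw [hx k (by simpa using hlt), mul_zero]
  · simp

lemma support {m : Matrix (Fin (N+1)) (Fin (N+1)) R} (hm : IsSteinbergM m)
    (x : Fin (N+1) → R) (hl : x (Fin.last N) = 0) (t : ℕ)
    (h : ∀ i : Fin (N+1), t < i → (m *ᵥ x) i = 0) :
    ∀ k : Fin (N+1), t ≤ k → x k = 0 := by
  have key : ∀ d : ℕ, ∀ k : Fin (N+1), N - (k : ℕ) = d → t ≤ k → x k = 0 := by
    intro d
    induction d using Nat.strong_induction_on with
    | _ d ih =>
      intro k hk htk
      by_cases hkN : (k : ℕ) = N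
      · rw [show k = Fin.last N from Fin.ext hkN]; exact hl
      · have := k.2
        obtain ⟨i, rfl⟩ : ∃ i : Fin N, k = i.castSucc := ⟨⟨k, by omega⟩, rfl⟩
        rw [← mulVec_row hm x i]
        · exact h _ (by simp at *; omega)
        · intro k' hk'
          have := k'.2
          simp only [Fin.val_castSucc] at *
          exact ih (N - k') (by omega) k' rfl (by omega)
  exact fun k => key _ k rfl

/-- The distinguished vector. -/
noncomputable def pvec (m : Matrix (Fin (N+1)) (Fin (N+1)) R) : Fin (N+1) → R :=
  m.adjugate *ᵥ (Pi.single 0 ((-1) ^ N))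

lemma mul_adj {m : Matrix (Fin (N+1)) (Fin (N+1)) R} (hm : IsSteinbergM m) (x : Fin (N+1) → R) :
    m *ᵥ (m.adjugate *ᵥ x) = x := by
  rw [Matrix.mulVec_mulVec, Matrix.mul_adjugate, hm.1]; simp

lemma mul_pvec {m : Matrix (Fin (N+1)) (Fin (N+1)) R} (hm : IsSteinbergM m) :
    m *ᵥ pvec m = Pi.single 0 ((-1) ^ N) := mul_adj hm _

lemma pvec_last {m : Matrix (Fin (N+1)) (Fin (N+1)) R} (hm : IsSteinbergM m) :
    pvec m (Fin.last N) = 1 := by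
  rw [pvec, Matrix.mulVec_single, Matrix.adjugate_def]
  change m.adjugate (Fin.last N) 0 * _ = 1
  rw [Matrix.adjugate_fin_succ_eq_det_submatrix]
  have : (m.submatrix (Fin.succAbove 0) (Fin.last N).succAbove).det = 1 := by
    apply det_uni
    constructor
    · intro i
      simp only [Matrix.submatrix_apply, Fin.succAbove_last, Fin.succAbove_zero]
      exact hm.2.1 _ _ (by simp)
    · intro i j hij
      simp only [Matrix.submatrix_apply, Fin.succAbove_last, Fin.succAbove_zero]
      exact hm.2.2 _ _ (by simpa using hij)
  rw [this]
  simp [pow_sq]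

/-- Columns of the solution, indexed by distance from the last column. -/
noncomputable def col (m : ℤ → Matrix (Fin (N+1)) (Fin (N+1)) R) : ℕ → ℤ → Fin (N+1) → R
  | 0, s => pvec (m (s-1))
  | d+1, s => (m (s-1)).adjugate *ᵥ col m d (s-1) -
      (((m (s-1)).adjugate *ᵥ col m d (s-1)) (Fin.last N)) • pvec (m (s-1))

lemma col_succ_last {m : ℤ → Matrix (Fin (N+1)) (Fin (N+1)) R} (hm : ∀ s, IsSteinbergM (m s))
    (d : ℕ) (s : ℤ) : col m (d+1) s (Fin.last N) = 0 := by
  simp [col, pvec_last (hm _)]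

lemma mul_col_succ {m : ℤ → Matrix (Fin (N+1)) (Fin (N+1)) R} (hm : ∀ s, IsSteinbergM (m s))
    (d : ℕ) (s : ℤ) (i : Fin N) : (m s *ᵥ col m (d+1) (s+1)) i.succ = col m d s i.succ := by
  simp [col, Matrix.mulVec_sub, Matrix.mulVec_smul, mul_pvec (hm _), mul_adj (hm _)]

lemma col_uni {m : ℤ → Matrix (Fin (N+1)) (Fin (N+1)) R} (hm : ∀ s, IsSteinbergM (m s))
    (d : ℕ) : ∀ (s : ℤ) (j : Fin (N+1)), (j : ℕ) + d = N →
    col m d s j = 1 ∧ ∀ k : Fin (N+1), (j : ℕ) < k → col m d s k = 0 := by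
  induction d with
  | zero =>
    intro s j hj
    obtain rfl : j = Fin.last N := Fin.ext (by simpa using hj)
    refine ⟨pvec_last (hm _), fun k hk => ?_⟩
    have := k.2
    simp at hk
    omega
  | succ d ih =>
    intro s j hj
    obtain ⟨j, rfl⟩ : ∃ j' : Fin N, j = j'.castSucc := ⟨⟨j, by omega⟩, rfl⟩
    obtain ⟨s, rfl⟩ : ∃ s', s = s' + 1 := ⟨s - 1, by ring⟩
    simp only [Fin.val_castSucc] at *
    have h0 := ih s j.succ (by simp; omega)
    have h2 : ∀ k : Fin (N+1), (j : ℕ) < k → col m (d+1) (s+1) k = 0 := by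
      refine support (hm s) _ (col_succ_last hm d _) (j+1) ?_
      intro i hi
      obtain ⟨i, rfl⟩ : ∃ i' : Fin N, i = i'.succ :=
        Fin.exists_succ_eq.2 (by rintro rfl; simp at hi) |>.imp fun _ h => h.symm
      rw [mul_col_succ hm]
      exact h0.2 _ (by simpa using hi)
    refine ⟨?_, h2⟩
    rw [← mulVec_row (hm s) _ j h2, mul_col_succ hm, h0.1]

/-- The solution `u`. -/
noncomputable def sol (m : ℤ → Matrix (Fin (N+1)) (Fin (N+1)) R) (s : ℤ) :
    Matrix (Fin (N+1)) (Fin (N+1)) R := Matrix.of fun i j => col m (N - j) s i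

/-- The solution `a`. -/
noncomputable def solA (m : ℤ → Matrix (Fin (N+1)) (Fin (N+1)) R) (s : ℤ) :
    Matrix (Fin (N+1)) (Fin (N+1)) R := Matrix.of fun i j =>
  if i = 0 then
    if h : (j : ℕ) < N then (m s * sol m (s+1)) 0 j - sol m s 0 (Fin.succ ⟨j, h⟩) else (-1) ^ N
  else if (i : ℕ) = j + 1 then 1 else 0

lemma sol_uni {m : ℤ → Matrix (Fin (N+1)) (Fin (N+1)) R} (hm : ∀ s, IsSteinbergM (m s))
    (s : ℤ) : IsUniUpper (sol m s) :=
  ⟨fun i => (col_uni hm (N - i) s i (by omega)).1,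
   fun i j hij => (col_uni hm (N - j) s j (by omega)).2 i hij⟩

lemma solA_A (m : ℤ → Matrix (Fin (N+1)) (Fin (N+1)) R) (s : ℤ) : IsSteinbergA (solA m s) := by
  refine ⟨?_, ?_, ?_⟩
  · intro i j hi hj
    have : i = 0 := Fin.ext hi
    simp at hj
    simp [solA, this, hj]
  · intro i j hij
    have : i ≠ 0 := by rintro rfl; simp at hij
    simp [solA, this, hij]
  · intro i j hi hij
    have : i ≠ 0 := by rintro rfl; simp at hi
    simp [solA, this, hij]

lemma mul_col_eq (m v : Matrix (Fin (N+1)) (Fin (N+1)) R) (i j : Fin (N+1)) :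
    (m * v) i j = (m *ᵥ (fun k => v k j)) i := rfl

lemma sol_eq {m : ℤ → Matrix (Fin (N+1)) (Fin (N+1)) R} (hm : ∀ s, IsSteinbergM (m s))
    (s : ℤ) : m s * sol m (s+1) = sol m s * solA m s := by
  have hu := sol_uni hm s
  ext i j
  induction j using Fin.lastCases with
  | last =>
    rw [mul_a_last (solA_A m s), mul_col_eq]
    have : (fun k => sol m (s+1) k (Fin.last N)) = pvec (m s) := by
      ext k; simp [sol, col]
    rw [this, mul_pvec (hm s)]
    induction i using Fin.cases with
    | zero => simp [hu.1]
    | succ i => simp [hu.2 i.succ 0 (by simp)]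
  | cast j =>
    rw [mul_a_castSucc (solA_A m s)]
    induction i using Fin.cases with
    | zero =>
      simp [hu.1, solA]
      exact (sub_add_cancel _ _).symm
    | succ i =>
      rw [hu.2 i.succ 0 (by simp), zero_mul, zero_add, mul_col_eq]
      have : (fun k => sol m (s+1) k j.castSucc) = col m ((N - (j+1)) + 1) (s+1) := by
        ext k
        simp only [sol, Matrix.of_apply, Fin.val_castSucc]
        congr 1
        have := j.2
        omega
      rw [this, mul_col_succ hm]
      simp [sol]

lemma unique_u {m u u' a a' : ℤ → Matrix (Fin (N+1)) (Fin (N+1)) R}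
    (hm : ∀ s, IsSteinbergM (m s)) (hu : ∀ s, IsUniUpper (u s)) (hu' : ∀ s, IsUniUpper (u' s))
    (ha : ∀ s, IsSteinbergA (a s)) (ha' : ∀ s, IsSteinbergA (a' s))
    (h : ∀ s, m s * u (s+1) = u s * a s) (h' : ∀ s, m s * u' (s+1) = u' s * a' s) :
    ∀ (j : Fin (N+1)) (s : ℤ) (i : Fin (N+1)), u s i j = u' s i j := by
  intro j
  have hinj : ∀ s (x y : Fin (N+1) → R), m s *ᵥ x = m s *ᵥ y → x = y := by
    intro s x y hxy
    have := congrArg (fun z => (m s).adjugate *ᵥ z) hxy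
    simpa [Matrix.mulVec_mulVec, Matrix.adjugate_mul, (hm s).1] using this
  induction j using Fin.reverseInduction with
  | last =>
    intro s
    obtain ⟨s, rfl⟩ : ∃ s', s = s' + 1 := ⟨s - 1, by ring⟩
    refine congrFun (hinj s (fun k => u (s+1) k (Fin.last N)) (fun k => u' (s+1) k (Fin.last N)) ?_)
    ext i
    rw [← mul_col_eq, ← mul_col_eq, h, h', mul_a_last (ha s), mul_a_last (ha' s)]
    induction i using Fin.cases with
    | zero => rw [(hu s).1, (hu' s).1]
    | succ i => rw [(hu s).2 _ _ (by simp), (hu' s).2 _ _ (by simp)]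
  | cast j ih =>
    intro s i
    obtain ⟨s, rfl⟩ : ∃ s', s = s' + 1 := ⟨s - 1, by ring⟩
    rw [← sub_eq_zero]
    refine support (hm s)
      ((fun k => u (s+1) k j.castSucc) - (fun k => u' (s+1) k j.castSucc)) ?_ 0 ?_ i (Nat.zero_le _)
    · simp [(hu (s+1)).2 (Fin.last N) j.castSucc (by simp),
        (hu' (s+1)).2 (Fin.last N) j.castSucc (by simp)]
    · intro i hi
      rw [Matrix.mulVec_sub, Pi.sub_apply, ← mul_col_eq, ← mul_col_eq, h, h',
        mul_a_castSucc (ha s), mul_a_castSucc (ha' s), (hu s).2 i 0 (by simpa using hi),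
        (hu' s).2 i 0 (by simpa using hi), ih]
      simp

lemma eq_mul_inv {m v x : Matrix (Fin (N+1)) (Fin (N+1)) R} (hv : IsUniUpper v) :
    m = x * v⁻¹ ↔ m * v = x := by
  have hd : IsUnit v.det := by rw [det_uni hv]; exact isUnit_one
  constructor
  · rintro rfl
    rw [Matrix.mul_assoc, Matrix.nonsing_inv_mul _ hd, Matrix.mul_one]
  · rintro rfl
    rw [Matrix.mul_assoc, Matrix.mul_nonsing_inv _ hd, Matrix.mul_one]

end SteinbergAux

open SteinbergAux in
/-- the map `U(R)^ℤ × A(R)^ℤ → M(R)^ℤ` sending `(u, a)` to the sequence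
`s ↦ u(s)·a(s)·u(s+1)⁻¹` is a bijection. -/
theorem stmt_10 (n : ℕ) (hn : 2 ≤ n) (R : Type*) [CommRing R] [Algebra ℂ R] :
    Set.BijOn
      (fun p : (ℤ → Matrix (Fin n) (Fin n) R) × (ℤ → Matrix (Fin n) (Fin n) R) =>
        fun s : ℤ => p.1 s * p.2 s * (p.1 (s + 1))⁻¹)
      ({u | ∀ s : ℤ, IsUniUpper (u s)} ×ˢ {a | ∀ s : ℤ, IsSteinbergA (a s)})
      {m | ∀ s : ℤ, IsSteinbergM (m s)} := by
  obtain ⟨N, rfl⟩ : ∃ N, n = N + 1 := ⟨n - 1, by omega⟩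
  have hmaps : ∀ (u a : ℤ → Matrix (Fin (N+1)) (Fin (N+1)) R), (∀ s, IsUniUpper (u s)) →
      (∀ s, IsSteinbergA (a s)) → ∀ s, IsSteinbergM (u s * a s * (u (s+1))⁻¹) :=
    fun u a hu ha s => mem_M (hu s) (ha s) (hu (s+1)) ((eq_mul_inv (hu (s+1))).1 rfl)
  refine ⟨?_, ?_, ?_⟩
  · rintro ⟨u, a⟩ ⟨hu, ha⟩
    exact hmaps u a hu ha
  · rintro ⟨u, a⟩ ⟨hu, ha⟩ ⟨u', a'⟩ ⟨hu', ha'⟩ heq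
    simp only [Set.mem_ofPred_eq] at hu ha hu' ha'
    have h : ∀ s, (u s * a s * (u (s+1))⁻¹) * u (s+1) = u s * a s :=
      fun s => (eq_mul_inv (hu (s+1))).1 rfl
    have h' : ∀ s, (u s * a s * (u (s+1))⁻¹) * u' (s+1) = u' s * a' s :=
      fun s => (eq_mul_inv (hu' (s+1))).1 (congrFun heq s)
    have huu : u = u' := by
      ext s i j
      exact unique_u (hmaps u a hu ha) hu hu' ha ha' h h' j s i
    subst huu
    have haa : a = a' := by
      ext1 s
      have e : u s * a s = u s * a' s := (h s).symm.trans (h' s)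
      have hd : IsUnit (u s).det := by rw [det_uni (hu s)]; exact isUnit_one
      have := congrArg (fun z => (u s)⁻¹ * z) e
      simpa [← Matrix.mul_assoc, Matrix.nonsing_inv_mul _ hd] using this
    rw [haa]
  · intro m hm
    refine ⟨(sol m, solA m), ⟨fun s => sol_uni hm s, fun s => solA_A m s⟩, ?_⟩
    ext1 s
    exact ((eq_mul_inv (sol_uni hm (s+1))).2 (sol_eq hm s)).symm
end

section
/- Let R be a commutative ℂ-algebra, let m : ℕ → M(R) be a sequence, and let u₀ ∈ U(R). Then there exists a unique sequence u : ℕ → U(R) with u(0) = u₀ such that u(s)·m(s)·u(s+1)⁻¹ ∈ A(R) for every s ∈ ℕ. Moreover, if u and u′ are the sequences associated in this way to the same m but to two initial values u₀ and u₀′, then u(s) = u′(s) for all s ≥ n−1 (for SL(n) with the standard Coxeter element, the integers m_i equal n−i, so max_i m_i = n−1). -/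
theorem aux_det_uni {n : ℕ} {R : Type*} [CommRing R] {u : Matrix (Fin n) (Fin n) R}
    (hu : IsUniUpper u) : u.det = 1 := by
  have h : u.BlockTriangular id := fun i j hij => hu.2 i j hij
  rw [Matrix.det_of_isUpperTriangular h]
  exact Finset.prod_eq_one fun i _ => hu.1 i

/-- The successor matrix. -/
def stepMat {n : ℕ} {R : Type*} [CommRing R] (w : Matrix (Fin n) (Fin n) R) :
    Matrix (Fin n) (Fin n) R :=
  fun i j => if h : (i : ℕ) + 1 < n then w ⟨i + 1, h⟩ j else if i = j then 1 else 0

theorem step_uni {n : ℕ} {R : Type*} [CommRing R] {u m : Matrix (Fin n) (Fin n) R}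
    (hu : IsUniUpper u) (hm : IsSteinbergM m) : IsUniUpper (stepMat (u * m)) := by
  constructor
  · intro i
    unfold stepMat
    split_ifs with h
    · rw [Matrix.mul_apply, Finset.sum_eq_single ⟨i + 1, h⟩]
      · rw [hu.1, hm.2.1 _ _ rfl, one_mul]
      · intro b _ hb
        rcases lt_or_gt_of_ne (fun e => hb (Fin.ext e) : (b : ℕ) ≠ i + 1) with h1 | h1
        · rw [hu.2 _ _ h1, zero_mul]
        · rw [hm.2.2 _ _ h1, mul_zero]
      · simp
    · rfl
    · exact absurd rfl ‹¬ i = i›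
  · intro i j hij
    unfold stepMat
    split_ifs with h h'
    · rw [Matrix.mul_apply]
      refine Finset.sum_eq_zero fun b _ => ?_
      rcases lt_or_ge (b : ℕ) (i + 1) with h1 | h1
      · rw [hu.2 _ _ h1, zero_mul]
      · rw [hm.2.2 _ _ (by omega), mul_zero]
    · subst h'; omega
    · rfl

theorem eq_step {n : ℕ} {R : Type*} [CommRing R] {u m v : Matrix (Fin n) (Fin n) R}
    (hv : IsUniUpper v) (ha : IsSteinbergA (u * m * v⁻¹)) : v = stepMat (u * m) := by
  have hd : IsUnit v.det := by rw [aux_det_uni hv]; exact isUnit_one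
  have e : u * m * v⁻¹ * v = u * m := Matrix.nonsing_inv_mul_cancel_right _ _ hd
  ext i j
  unfold stepMat
  split_ifs with h h'
  · rw [← e, Matrix.mul_apply, Finset.sum_eq_single i]
    · rw [ha.2.1 _ _ rfl, one_mul]
    · intro b _ hb
      rw [ha.2.2 _ _ (by simp) (fun e => hb (Fin.ext (by simp at e; omega))), zero_mul]
    · simp
  · subst h'; exact hv.1 i
  · exact hv.2 _ _ (by
      have : (i : ℕ) ≠ j := fun e => h' (Fin.ext e)
      omega)

theorem step_A {n : ℕ} (hn : 2 ≤ n) {R : Type*} [CommRing R] {u m : Matrix (Fin n) (Fin n) R}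
    (hu : IsUniUpper u) (hm : IsSteinbergM m) :
    IsSteinbergA (u * m * (stepMat (u * m))⁻¹) := by
  have hv := step_uni hu hm
  have hs : ∀ i i' j : Fin n, (i : ℕ) = i' + 1 → (u * m) i j = stepMat (u * m) i' j := by
    intro i i' j h
    have h2 : (i' : ℕ) + 1 < n := by omega
    have h3 : i = ⟨i' + 1, h2⟩ := Fin.ext h
    rw [stepMat, dif_pos h2, h3]
  have hwd : (u * m).det = 1 := by rw [Matrix.det_mul, aux_det_uni hu, hm.1, one_mul]
  generalize stepMat (u * m) = v at *
  generalize u * m = w at *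
  have hdv := aux_det_uni hv
  have hd : IsUnit v.det := by rw [hdv]; exact isUnit_one
  have hrow : ∀ i i' j : Fin n, (i : ℕ) = i' + 1 →
      (w * v⁻¹) i j = (1 : Matrix (Fin n) (Fin n) R) i' j := by
    intro i i' j h
    rw [← Matrix.mul_nonsing_inv v hd, Matrix.mul_apply, Matrix.mul_apply]
    exact Finset.sum_congr rfl fun k _ => by rw [hs i i' k h]
  have hda : (w * v⁻¹).det = 1 := by
    have := congrArg Matrix.det (Matrix.nonsing_inv_mul_cancel_right v w hd)
    rwa [Matrix.det_mul, hdv, mul_one, hwd] at this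
  generalize w * v⁻¹ = a at *
  refine ⟨?_, ?_, ?_⟩
  · obtain ⟨k, rfl⟩ : ∃ k, n = k + 1 := ⟨n - 1, by omega⟩
    intro i j hi hj
    obtain rfl : i = 0 := Fin.ext hi
    obtain rfl : j = Fin.last k := Fin.ext (by simpa using hj)
    rw [Matrix.det_succ_column a (Fin.last k), Finset.sum_eq_single 0] at hda
    · have : a.submatrix (Fin.succAbove 0) (Fin.succAbove (Fin.last k)) = 1 := by
        ext p q
        rw [Matrix.submatrix_apply, Fin.succAbove_zero, Fin.succAbove_last,
          hrow p.succ p.castSucc _ (by simp)]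
        simp [Matrix.one_apply]
      rw [this] at hda
      simp only [Fin.val_zero, Fin.val_last, zero_add, Matrix.det_one, mul_one] at hda
      have h2 : ((-1 : R) ^ k) * (-1) ^ k = 1 := by rw [← mul_pow]; simp
      simp only [Nat.add_sub_cancel]
      calc a 0 (Fin.last k) = ((-1 : R) ^ k * (-1) ^ k) * a 0 (Fin.last k) := by rw [h2, one_mul]
        _ = _ := by rw [mul_assoc, hda, mul_one]
    · intro b _ hb
      obtain ⟨c, rfl⟩ := Fin.exists_succ_eq.2 hb
      rw [hrow c.succ c.castSucc _ (by simp), Matrix.one_apply_ne (Fin.castSucc_ne_last c)]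
      simp
    · simp
  · intro i j h
    rw [hrow i j j h, Matrix.one_apply_eq]
  · intro i j h0 h
    rw [hrow i ⟨i - 1, by omega⟩ j (by simp; omega), Matrix.one_apply_ne]
    intro e
    have := congrArg Fin.val e
    simp at this
    omega

/-- given `m : ℕ → M(R)` over a commutative `ℂ`-algebra `R` and `u₀ ∈ U(R)`,
there is a unique sequence `u : ℕ → U(R)` with `u(0) = u₀` and `u(s)·m(s)·u(s+1)⁻¹ ∈ A(R)`
for every `s ∈ ℕ`; moreover two such sequences attached to the same `m` (but possibly
different initial values) agree in all components `s ≥ n − 1`. -/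
theorem stmt_11 (n : ℕ) (hn : 2 ≤ n) (R : Type*) [CommRing R] [Algebra ℂ R]
    (m : ℕ → Matrix (Fin n) (Fin n) R) (hm : ∀ s : ℕ, IsSteinbergM (m s)) :
    (∀ u₀ : Matrix (Fin n) (Fin n) R, IsUniUpper u₀ →
      ∃! u : ℕ → Matrix (Fin n) (Fin n) R,
        (∀ s : ℕ, IsUniUpper (u s)) ∧ u 0 = u₀ ∧
        ∀ s : ℕ, IsSteinbergA (u s * m s * (u (s + 1))⁻¹)) ∧
    (∀ u u' : ℕ → Matrix (Fin n) (Fin n) R,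
      (∀ s : ℕ, IsUniUpper (u s)) → (∀ s : ℕ, IsUniUpper (u' s)) →
      (∀ s : ℕ, IsSteinbergA (u s * m s * (u (s + 1))⁻¹)) →
      (∀ s : ℕ, IsSteinbergA (u' s * m s * (u' (s + 1))⁻¹)) →
      ∀ s : ℕ, n - 1 ≤ s → u s = u' s) := by
  refine ⟨?_, ?_⟩
  · intro u₀ h0
    let f : ℕ → Matrix (Fin n) (Fin n) R :=
      fun s => Nat.rec u₀ (fun s w => stepMat (w * m s)) s
    have hf : ∀ s, f (s + 1) = stepMat (f s * m s) := fun s => rfl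
    have hU : ∀ s, IsUniUpper (f s) := by
      intro s
      induction s with
      | zero => exact h0
      | succ s ih => rw [hf]; exact step_uni ih (hm s)
    refine ⟨f, ⟨hU, rfl, fun s => ?_⟩, ?_⟩
    · rw [hf]; exact step_A hn (hU s) (hm s)
    · rintro g ⟨hg, hg0, hgA⟩
      funext s
      induction s with
      | zero => exact hg0
      | succ s ih => rw [eq_step (hg (s + 1)) (hgA s), ih, hf]
  · intro u u' hu hu' hA hA'
    have key : ∀ s : ℕ, ∀ i j : Fin n, n - 1 ≤ i + s → u s i j = u' s i j := by
      intro s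
      induction s with
      | zero =>
        intro i j h
        by_cases hij : i = j
        · subst hij; rw [(hu 0).1, (hu' 0).1]
        · have h1 : (i : ℕ) ≠ j := fun e => hij (Fin.ext e)
          rw [(hu 0).2 i j (by omega), (hu' 0).2 i j (by omega)]
      | succ s ih =>
        intro i j h
        rw [eq_step (hu (s + 1)) (hA s), eq_step (hu' (s + 1)) (hA' s)]
        unfold stepMat
        split_ifs with h1 h2
        · rw [Matrix.mul_apply, Matrix.mul_apply]
          exact Finset.sum_congr rfl fun k _ => by rw [ih ⟨i + 1, h1⟩ k (by simp; omega)]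
        · rfl
        · rfl
    intro s hs
    ext i j
    exact key s i j (by omega)
end

section
/- Let N ≥ 2 be an integer and R a commutative ℂ-algebra. For every sequence m : ℤ/Nℤ → M(R) there exists a unique sequence u : ℤ/Nℤ → U(R) such that u(s)·m(s)·u(s+1)⁻¹ ∈ A(R) for every s ∈ ℤ/Nℤ. That is, the group U(R)^{ℤ/Nℤ} acts freely on M(R)^{ℤ/Nℤ} by the cyclic discrete gauge transformation, and A(R)^{ℤ/Nℤ} is a cross-section. -/
theorem IsUniUpper.det_eq {n : ℕ} {R : Type*} [CommRing R] {u : Matrix (Fin n) (Fin n) R}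
    (h : IsUniUpper u) : u.det = 1 := by
  rw [Matrix.det_of_isUpperTriangular (fun i j hij => h.2 i j hij)]
  simp [h.1]

theorem steinberg_corner_s12 {k : ℕ} {R : Type*} [CommRing R]
    (a : Matrix (Fin (k + 1)) (Fin (k + 1)) R) (hd : a.det = 1)
    (h1 : ∀ i j : Fin (k + 1), (i : ℕ) = (j : ℕ) + 1 → a i j = 1)
    (h0 : ∀ i j : Fin (k + 1), (i : ℕ) ≠ 0 → (i : ℕ) ≠ (j : ℕ) + 1 → a i j = 0) :
    a 0 (Fin.last k) = (-1) ^ k := by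
  rw [Matrix.det_succ_column a (Fin.last k), Finset.sum_eq_single 0] at hd
  · have hs : a.submatrix (Fin.succAbove 0) (Fin.succAbove (Fin.last k)) = 1 := by
      ext i j
      simp only [Matrix.submatrix_apply, Fin.succAbove_last, Fin.zero_succAbove]
      by_cases hij : i = j
      · subst hij
        rw [Matrix.one_apply_eq]
        exact h1 _ _ (by simp)
      · rw [Matrix.one_apply_ne hij]
        refine h0 _ _ (by simp) ?_
        simp only [Fin.val_succ, Fin.val_castSucc]
        intro h
        exact hij (Fin.ext (by omega))
    rw [hs] at hd
    simp only [Fin.val_zero, Fin.val_last, zero_add, Matrix.det_one, mul_one] at hd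
    have hsq : ((-1 : R) ^ k) * (-1) ^ k = 1 := by
      rw [← mul_pow]; simp
    calc a 0 (Fin.last k) = ((-1 : R) ^ k * (-1) ^ k) * a 0 (Fin.last k) := by rw [hsq, one_mul]
      _ = (-1) ^ k * ((-1) ^ k * a 0 (Fin.last k)) := by ring
      _ = (-1) ^ k := by rw [hd, mul_one]
  · intro i _ hi
    have : a i (Fin.last k) = 0 := by
      refine h0 _ _ (fun h => hi (Fin.ext h)) ?_
      have := i.2
      simp only [Fin.val_last]
      omega
    rw [this]; ring
  · intro h; exact absurd (Finset.mem_univ _) h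

theorem steinbergA_iff_s12 {k : ℕ} {R : Type*} [CommRing R]
    {u m v : Matrix (Fin (k + 1)) (Fin (k + 1)) R} (hu : IsUniUpper u) (hv : IsUniUpper v)
    (hm : IsSteinbergM m) :
    IsSteinbergA (u * m * v⁻¹) ↔ ∀ i : Fin k, (u * m) i.succ = v i.castSucc := by
  have hvd : IsUnit v.det := by rw [hv.det_eq]; exact isUnit_one
  constructor
  · rintro ⟨-, h1, h0⟩ i
    have e : u * m = (u * m * v⁻¹) * v := by
      rw [Matrix.mul_assoc, Matrix.nonsing_inv_mul _ hvd, Matrix.mul_one]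
    funext j
    rw [e, Matrix.mul_apply, Finset.sum_eq_single i.castSucc]
    · rw [h1 _ _ (by simp), one_mul]
    · intro b _ hb
      rw [h0 _ _ (by simp) (fun h => hb (Fin.ext (by simp at h ⊢; omega))), zero_mul]
    · intro h; exact absurd (Finset.mem_univ _) h
  · intro h
    have key : ∀ (i : Fin k) (j : Fin (k + 1)),
        (u * m * v⁻¹) i.succ j = (1 : Matrix (Fin (k + 1)) (Fin (k + 1)) R) i.castSucc j := by
      intro i j
      rw [← Matrix.mul_nonsing_inv v hvd, Matrix.mul_apply, Matrix.mul_apply, h i]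
    have h1 : ∀ i j : Fin (k + 1), (i : ℕ) = (j : ℕ) + 1 → (u * m * v⁻¹) i j = 1 := by
      intro i j hij
      obtain ⟨i, rfl⟩ := Fin.exists_succ_eq.2 (show i ≠ 0 by rintro rfl; simp at hij)
      have : j = i.castSucc := Fin.ext (by simp at hij ⊢; omega)
      rw [key, this, Matrix.one_apply_eq]
    have h0 : ∀ i j : Fin (k + 1), (i : ℕ) ≠ 0 → (i : ℕ) ≠ (j : ℕ) + 1 →
        (u * m * v⁻¹) i j = 0 := by
      intro i j hi hij
      obtain ⟨i, rfl⟩ := Fin.exists_succ_eq.2 (show i ≠ 0 by rintro rfl; simp at hi)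
      rw [key, Matrix.one_apply_ne]
      rintro rfl
      simp at hij
    refine ⟨?_, h1, h0⟩
    intro i j hi hj
    have e1 : i = 0 := Fin.ext hi
    have e2 : j = Fin.last k := Fin.ext (by simpa using hj)
    subst e1 e2
    refine steinberg_corner_s12 _ ?_ h1 h0
    rw [Matrix.det_mul, Matrix.det_mul, hu.det_eq, hm.1, Matrix.det_nonsing_inv, hv.det_eq]
    simp

/-- Row number `k - j` of the gauge transformation at `s`. -/
def gaugeRow {N k : ℕ} {R : Type*} [CommRing R]
    (m : ZMod N → Matrix (Fin (k + 1)) (Fin (k + 1)) R) : ℕ → ZMod N → Fin (k + 1) → R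
  | 0, _ => Pi.single (Fin.last k) 1
  | j + 1, s => Matrix.vecMul (gaugeRow m j (s - 1)) (m (s - 1))

theorem gaugeRow_spec {N k : ℕ} {R : Type*} [CommRing R]
    (m : ZMod N → Matrix (Fin (k + 1)) (Fin (k + 1)) R) (hm : ∀ s, IsSteinbergM (m s))
    (j : ℕ) (s : ZMod N) (c : Fin (k + 1)) :
    ((c : ℕ) + j = k → gaugeRow m j s c = 1) ∧ ((c : ℕ) + j < k → gaugeRow m j s c = 0) := by
  induction j generalizing s c with
  | zero =>
    constructor
    · intro h
      have : c = Fin.last k := Fin.ext (by simpa using h)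
      simp [gaugeRow, this]
    · intro h
      have : c ≠ Fin.last k := by rintro rfl; simp at h
      simp [gaugeRow, this]
  | succ j ih =>
    simp only [gaugeRow, Matrix.vecMul, dotProduct]
    constructor
    · intro h
      have hc : (c : ℕ) + 1 < k + 1 := by omega
      rw [Finset.sum_eq_single ⟨c + 1, hc⟩]
      · rw [(ih (s - 1) ⟨c + 1, hc⟩).1 (by simp; omega), (hm _).2.1 _ _ rfl, one_mul]
      · intro b _ hb
        have hb' : (b : ℕ) ≠ c + 1 := fun h => hb (Fin.ext h)
        rcases lt_or_gt_of_ne hb' with h' | h'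
        · rw [(ih (s - 1) b).2 (by omega), zero_mul]
        · rw [(hm _).2.2 _ _ h', mul_zero]
      · intro h; exact absurd (Finset.mem_univ _) h
    · intro h
      refine Finset.sum_eq_zero fun b _ => ?_
      by_cases h' : (b : ℕ) + j < k
      · rw [(ih (s - 1) b).2 h', zero_mul]
      · rw [(hm _).2.2 _ _ (by omega), mul_zero]

theorem stmt_12 (n : ℕ) (hn : 2 ≤ n) (N : ℕ) (hN : 2 ≤ N)
    (R : Type*) [CommRing R] [Algebra ℂ R]
    (m : ZMod N → Matrix (Fin n) (Fin n) R) (hm : ∀ s : ZMod N, IsSteinbergM (m s)) :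
    ∃! u : ZMod N → Matrix (Fin n) (Fin n) R,
      (∀ s : ZMod N, IsUniUpper (u s)) ∧
      ∀ s : ZMod N, IsSteinbergA (u s * m s * (u (s + 1))⁻¹) := by
  obtain ⟨k, rfl⟩ : ∃ k, n = k + 1 := ⟨n - 1, by omega⟩
  have hU : ∀ s : ZMod N, IsUniUpper
      (Matrix.of fun i : Fin (k + 1) => gaugeRow m (k - i) s) := by
    intro s
    constructor
    · intro i
      exact (gaugeRow_spec m hm _ s i).1 (by omega)
    · intro i j hij
      exact (gaugeRow_spec m hm _ s j).2 (by omega)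
  refine ⟨fun s => Matrix.of fun i => gaugeRow m (k - i) s, ⟨hU, fun s => ?_⟩, ?_⟩
  · rw [steinbergA_iff_s12 (hU s) (hU (s + 1)) (hm s)]
    intro i
    have e : k - ((i.castSucc : Fin (k + 1)) : ℕ) = (k - ((i.succ : Fin (k + 1)) : ℕ)) + 1 := by
      have := i.2
      simp only [Fin.val_castSucc, Fin.val_succ]
      omega
    funext c
    simp only [Matrix.of_apply]
    rw [e, gaugeRow, add_sub_cancel_right]
    rfl
  · rintro u ⟨hu, hA⟩
    have main : ∀ (j : ℕ) (s : ZMod N) (i : Fin (k + 1)), (i : ℕ) + j = k →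
        u s i = gaugeRow m j s := by
      intro j
      induction j with
      | zero =>
        intro s i hi
        have hi' : i = Fin.last k := Fin.ext (by simpa using hi)
        subst hi'
        funext c
        by_cases hc : c = Fin.last k
        · subst hc
          simp [gaugeRow, (hu s).1]
        · rw [(hu s).2 _ _ (by simpa using Fin.val_lt_last hc)]
          simp [gaugeRow, hc]
      | succ j ih =>
        intro s i hi
        have hik : (i : ℕ) < k := by omega
        have hA' := hA (s - 1)
        rw [steinbergA_iff_s12 (hu _) (hu _) (hm _)] at hA'
        have h := hA' ⟨i, hik⟩
        rw [sub_add_cancel] at h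
        have e : (Fin.castSucc ⟨i, hik⟩ : Fin (k + 1)) = i := rfl
        rw [e] at h
        rw [← h, gaugeRow, ← ih (s - 1) (Fin.succ ⟨i, hik⟩) (by simp; omega)]
        rfl
    funext s
    ext i c
    rw [main (k - i) s i (by omega)]
    rfl
end

section
/- Let (K, σ) be a difference field and β ∈ K a nonzero element, and let f be the 2×2 matrix [[β, 0], [1, β⁻¹]]. Then there is a unique upper unitriangular 2×2 matrix u over K such that σ(u)·f·u⁻¹ lies in A(K), namely u = [[1, β⁻¹], [0, 1]]; and for this u one has σ(u)·f·u⁻¹ = [[β + σ(β)⁻¹, −1], [1, 0]]. (This is the q-difference Miura transformation formula θ₁(z) = β₁(z) + 1/β₁(qz) for SL(2).) -/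
theorem miura_aux (K : Type*) [Field K] (σ : K ≃+* K) (β x : K) :
    (!![1, x; 0, 1] : Matrix (Fin 2) (Fin 2) K).map σ * !![β, 0; 1, β⁻¹] *
      (!![1, x; 0, 1] : Matrix (Fin 2) (Fin 2) K)⁻¹ =
      !![β + σ x, -(x * (β + σ x)) + σ x * β⁻¹; 1, -x + β⁻¹] := by
  have hinv : (!![1, x; 0, 1] : Matrix (Fin 2) (Fin 2) K)⁻¹ = !![1, -x; 0, 1] := by
    apply Matrix.inv_eq_right_inv
    ext i j
    fin_cases i <;> fin_cases j <;> simp [Matrix.mul_apply, Fin.sum_univ_two]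
  rw [hinv]
  ext i j
  fin_cases i <;> fin_cases j <;> simp [Matrix.mul_apply, Fin.sum_univ_two] <;> ring

/-- for a difference field `(K, σ)` and `β ≠ 0`, with `f = [[β, 0], [1, β⁻¹]]`,
there is a unique upper unitriangular `u` with `σ(u)·f·u⁻¹ ∈ A(K)`, namely
`u = [[1, β⁻¹], [0, 1]]`, and then `σ(u)·f·u⁻¹ = [[β + σ(β)⁻¹, −1], [1, 0]]` (the q-difference
Miura transformation for `SL(2)`). -/
theorem stmt_13 (K : Type*) [Field K] (σ : K ≃+* K) (β : K) (hβ : β ≠ 0) :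
    (∃! u : Matrix (Fin 2) (Fin 2) K,
      IsUniUpper u ∧ IsSteinbergA (u.map σ * !![β, 0; 1, β⁻¹] * u⁻¹)) ∧
    (∀ u : Matrix (Fin 2) (Fin 2) K,
      IsUniUpper u → IsSteinbergA (u.map σ * !![β, 0; 1, β⁻¹] * u⁻¹) →
        u = !![1, β⁻¹; 0, 1]) ∧
    (!![1, β⁻¹; 0, 1]).map σ * !![β, 0; 1, β⁻¹] * (!![1, β⁻¹; 0, 1] : Matrix (Fin 2) (Fin 2) K)⁻¹ =
      !![β + (σ β)⁻¹, -1; 1, 0] := by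
  have key : (!![1, β⁻¹; 0, 1]).map σ * !![β, 0; 1, β⁻¹] *
      (!![1, β⁻¹; 0, 1] : Matrix (Fin 2) (Fin 2) K)⁻¹ = !![β + (σ β)⁻¹, -1; 1, 0] := by
    rw [miura_aux]
    ext i j
    fin_cases i <;> fin_cases j <;> simp
    field_simp
    ring
  have uniq : ∀ u : Matrix (Fin 2) (Fin 2) K,
      IsUniUpper u → IsSteinbergA (u.map σ * !![β, 0; 1, β⁻¹] * u⁻¹) →
        u = !![1, β⁻¹; 0, 1] := by
    intro u hu hA
    have hu' : u = !![1, u 0 1; 0, 1] := by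
      ext i j
      fin_cases i <;> fin_cases j
      · exact hu.1 0
      · rfl
      · exact hu.2 1 0 (by simp)
      · exact hu.1 1
    rw [hu', miura_aux] at hA
    have h := hA.2.2 1 1 (by simp) (by simp)
    have h2 : -(u 0 1) + β⁻¹ = 0 := h
    have h3 : u 0 1 = β⁻¹ := by linear_combination -h2
    rw [hu', h3]
  refine ⟨⟨!![1, β⁻¹; 0, 1], ⟨⟨?_, ?_⟩, ?_⟩, fun u h => uniq u h.1 h.2⟩, uniq, key⟩
  · intro i
    fin_cases i <;> rfl
  · intro i j
    fin_cases i <;> fin_cases j <;> simp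
  · rw [key]
    refine ⟨?_, ?_, ?_⟩ <;> intro i j <;> fin_cases i <;> fin_cases j <;> simp
end

section
/- Let (K, σ) be a difference field and β₁, β₂ ∈ K nonzero elements, and let f be the 3×3 matrix [[β₁, 0, 0], [1, β₂·β₁⁻¹, 0], [0, 1, β₂⁻¹]]. Then there is a unique upper unitriangular 3×3 matrix u over K such that σ(u)·f·u⁻¹ lies in A(K); and for this u one has σ(u)·f·u⁻¹ = [[θ₁, −θ₂, 1], [1, 0, 0], [0, 1, 0]], where θ₁ = β₁ + σ(β₂)·σ(β₁)⁻¹ + σ(σ(β₂))⁻¹ and θ₂ = β₂ + β₁·σ(β₂)⁻¹ + σ(β₁)⁻¹. (This is the q-difference Miura transformation formula θ₁(z) = β₁(z) + β₂(qz)/β₁(qz) + 1/β₂(q²z), θ₂(z) = β₂(z) + β₁(z)/β₂(qz) + 1/β₁(qz) for SL(3).) -/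
/-- The value of `σ(u)·f·u⁻¹` for a unitriangular `u` with entries `x, y, z`. -/
lemma miura_prod {K : Type*} [Field K] (σ : K ≃+* K) (β₁ β₂ x y z : K) :
    (!![1, x, z; 0, 1, y; 0, 0, 1] : Matrix (Fin 3) (Fin 3) K).map σ *
      !![β₁, 0, 0; 1, β₂ * β₁⁻¹, 0; 0, 1, β₂⁻¹] *
      (!![1, x, z; 0, 1, y; 0, 0, 1] : Matrix (Fin 3) (Fin 3) K)⁻¹ =
    !![β₁ + σ x, -(β₁ + σ x) * x + (σ x * (β₂ * β₁⁻¹) + σ z),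
        (β₁ + σ x) * (x * y - z) - (σ x * (β₂ * β₁⁻¹) + σ z) * y + σ z * β₂⁻¹;
       1, -x + (β₂ * β₁⁻¹ + σ y), (x * y - z) - (β₂ * β₁⁻¹ + σ y) * y + σ y * β₂⁻¹;
       0, 1, -y + β₂⁻¹] := by
  have hv : (!![1, x, z; 0, 1, y; 0, 0, 1] : Matrix (Fin 3) (Fin 3) K)⁻¹ =
      !![1, -x, x * y - z; 0, 1, -y; 0, 0, 1] := by
    apply Matrix.inv_eq_right_inv
    ext i j
    fin_cases i <;> fin_cases j <;> simp [Matrix.mul_apply, Fin.sum_univ_three] <;> ring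
  rw [hv]
  ext i j
  fin_cases i <;> fin_cases j <;> simp [Matrix.mul_apply, Fin.sum_univ_three] <;> ring

/-- A unitriangular matrix in coordinates. -/
lemma uniUpper_eq {K : Type*} [Field K] (u : Matrix (Fin 3) (Fin 3) K) (hu : IsUniUpper u) :
    u = !![1, u 0 1, u 0 2; 0, 1, u 1 2; 0, 0, 1] := by
  ext i j
  fin_cases i <;> fin_cases j <;> simp [hu.1] <;> exact hu.2 _ _ (by simp)

/-- The solution is forced. -/
lemma miura_unique {K : Type*} [Field K] (σ : K ≃+* K) (β₁ β₂ : K)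
    (u : Matrix (Fin 3) (Fin 3) K) (hu : IsUniUpper u)
    (h : IsSteinbergA (u.map σ * !![β₁, 0, 0; 1, β₂ * β₁⁻¹, 0; 0, 1, β₂⁻¹] * u⁻¹)) :
    u = !![1, β₂ * β₁⁻¹ + (σ β₂)⁻¹, (σ β₂)⁻¹ * β₂⁻¹; 0, 1, β₂⁻¹; 0, 0, 1] := by
  have hue := uniUpper_eq u hu
  generalize u 0 1 = x at hue
  generalize u 0 2 = z at hue
  generalize u 1 2 = y at hue
  subst hue
  rw [miura_prod] at h
  obtain ⟨-, -, h3⟩ := h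
  have e1 := h3 2 2 (by simp) (by simp)
  have e2 := h3 1 1 (by simp) (by simp)
  have e3 := h3 1 2 (by simp) (by simp)
  simp at e1 e2 e3
  have hy : y = β₂⁻¹ := by linear_combination -e1
  subst hy
  rw [map_inv₀] at e2 e3
  have hx : x = β₂ * β₁⁻¹ + (σ β₂)⁻¹ := by linear_combination -e2
  subst hx
  have hz : z = (σ β₂)⁻¹ * β₂⁻¹ := by linear_combination -e3
  rw [hz]

/-- The value at the solution. -/
lemma miura_value {K : Type*} [Field K] (σ : K ≃+* K) (β₁ β₂ : K) (hβ₁ : β₁ ≠ 0) (hβ₂ : β₂ ≠ 0) :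
    (!![1, β₂ * β₁⁻¹ + (σ β₂)⁻¹, (σ β₂)⁻¹ * β₂⁻¹; 0, 1, β₂⁻¹; 0, 0, 1] :
        Matrix (Fin 3) (Fin 3) K).map σ *
      !![β₁, 0, 0; 1, β₂ * β₁⁻¹, 0; 0, 1, β₂⁻¹] *
      (!![1, β₂ * β₁⁻¹ + (σ β₂)⁻¹, (σ β₂)⁻¹ * β₂⁻¹; 0, 1, β₂⁻¹; 0, 0, 1] :
        Matrix (Fin 3) (Fin 3) K)⁻¹ =
    !![β₁ + σ β₂ * (σ β₁)⁻¹ + (σ (σ β₂))⁻¹, -(β₂ + β₁ * (σ β₂)⁻¹ + (σ β₁)⁻¹), 1;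
             1, 0, 0;
             0, 1, 0] := by
  have h1 : σ β₁ ≠ 0 := by simpa using hβ₁
  have h2 : σ β₂ ≠ 0 := by simpa using hβ₂
  have h3 : σ (σ β₂) ≠ 0 := by simpa using hβ₂
  rw [miura_prod]
  ext i j
  fin_cases i <;> fin_cases j <;> simp <;> field_simp <;> ring

/-- for a difference field `(K, σ)` and `β₁, β₂ ≠ 0`, with
`f = [[β₁, 0, 0], [1, β₂β₁⁻¹, 0], [0, 1, β₂⁻¹]]`, there is a unique upper unitriangular `u`
with `σ(u)·f·u⁻¹ ∈ A(K)`, and for it `σ(u)·f·u⁻¹ = [[θ₁, −θ₂, 1], [1, 0, 0], [0, 1, 0]]` with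
`θ₁ = β₁ + σ(β₂)σ(β₁)⁻¹ + σ(σ(β₂))⁻¹` and `θ₂ = β₂ + β₁σ(β₂)⁻¹ + σ(β₁)⁻¹` (the q-difference
Miura transformation for `SL(3)`). -/
theorem stmt_14 (K : Type*) [Field K] (σ : K ≃+* K) (β₁ β₂ : K) (hβ₁ : β₁ ≠ 0) (hβ₂ : β₂ ≠ 0) :
    (∃! u : Matrix (Fin 3) (Fin 3) K,
      IsUniUpper u ∧
        IsSteinbergA (u.map σ * !![β₁, 0, 0; 1, β₂ * β₁⁻¹, 0; 0, 1, β₂⁻¹] * u⁻¹)) ∧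
    (∀ u : Matrix (Fin 3) (Fin 3) K,
      IsUniUpper u →
      IsSteinbergA (u.map σ * !![β₁, 0, 0; 1, β₂ * β₁⁻¹, 0; 0, 1, β₂⁻¹] * u⁻¹) →
        u.map σ * !![β₁, 0, 0; 1, β₂ * β₁⁻¹, 0; 0, 1, β₂⁻¹] * u⁻¹ =
          !![β₁ + σ β₂ * (σ β₁)⁻¹ + (σ (σ β₂))⁻¹, -(β₂ + β₁ * (σ β₂)⁻¹ + (σ β₁)⁻¹), 1;
             1, 0, 0;
             0, 1, 0]) := by
  have hS : IsUniUpper (!![1, β₂ * β₁⁻¹ + (σ β₂)⁻¹, (σ β₂)⁻¹ * β₂⁻¹; 0, 1, β₂⁻¹; 0, 0, 1] :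
        Matrix (Fin 3) (Fin 3) K) := by
    constructor
    · intro i
      fin_cases i <;> simp
    · intro i j hij
      fin_cases i <;> fin_cases j <;> simp at hij ⊢
  refine ⟨⟨_, ⟨hS, ?_⟩, fun u hu => miura_unique σ β₁ β₂ u hu.1 hu.2⟩, fun u hu h => ?_⟩
  · rw [miura_value σ β₁ β₂ hβ₁ hβ₂]
    refine ⟨?_, ?_, ?_⟩ <;> intro i j <;> fin_cases i <;> fin_cases j <;> simp
  · rw [miura_unique σ β₁ β₂ u hu h]
    exact miura_value σ β₁ β₂ hβ₁ hβ₂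
end

section
/- Let R be a commutative ring and g : ℤ → SL(n, R) an (SL(n), c)-band over R. Then for all s ∈ ℤ, all 1 ≤ i ≤ n−1, all 1 ≤ k ≤ n−i, and every i-element subset J of columns, the minor of g(s) on the rows {k+1, k+2, …, k+i} and the columns J equals the minor of g(s+1) on the rows {k, k+1, …, k+i−1} and the columns J. (This is the SL(n) instance of the gluing relations Δ^{(s)}_{c^k(ϖ_i), w(ϖ_i)} = Δ^{(s+1)}_{c^{k−1}(ϖ_i), w(ϖ_i)} for 1 ≤ k ≤ m_i, where m_i = n−i for the standard Coxeter element.) -/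
/-- for an `(SL(n), c)`-band `g`, all `s ∈ ℤ`, `1 ≤ i ≤ n−1`, `1 ≤ k ≤ n−i` and
every `i`-element set of columns `J`, the minor of `g(s)` on the rows `{k+1, …, k+i}` (1-based)
and columns `J` equals the minor of `g(s+1)` on the rows `{k, …, k+i−1}` and columns `J`
(the gluing relations `Δ^{(s)}_{c^k(ϖ_i), w(ϖ_i)} = Δ^{(s+1)}_{c^{k−1}(ϖ_i), w(ϖ_i)}`). -/
theorem stmt_16 (n : ℕ) (hn : 2 ≤ n) (R : Type*) [CommRing R]
    (g : ℤ → Matrix.SpecialLinearGroup (Fin n) R)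
    (hg : ∀ s : ℤ, IsSteinbergA
      ((g s * (g (s + 1))⁻¹ : Matrix.SpecialLinearGroup (Fin n) R) : Matrix (Fin n) (Fin n) R))
    (s : ℤ) (i k : ℕ) (hi1 : 1 ≤ i) (hi2 : i ≤ n - 1) (hk1 : 1 ≤ k) (hk2 : k ≤ n - i)
    (J : Finset (Fin n)) (hJ : J.card = i) :
    Matrix.det (Matrix.of fun a b : Fin i =>
      (g s : Matrix (Fin n) (Fin n) R)
        ⟨k + (a : ℕ), by have := a.isLt; omega⟩ ((J.orderIsoOfFin hJ b : Fin n))) =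
    Matrix.det (Matrix.of fun a b : Fin i =>
      (g (s + 1) : Matrix (Fin n) (Fin n) R)
        ⟨k - 1 + (a : ℕ), by have := a.isLt; omega⟩ ((J.orderIsoOfFin hJ b : Fin n))) := by
  congr 1
  ext a b
  simp only [Matrix.of_apply]
  obtain ⟨-, h1, h0⟩ := hg s
  have e : g s = (g s * (g (s + 1))⁻¹) * g (s + 1) := by group
  have e2 := congrArg (fun x : Matrix.SpecialLinearGroup (Fin n) R =>
    (x : Matrix (Fin n) (Fin n) R)) e
  have ha := a.isLt
  simp only [Matrix.SpecialLinearGroup.coe_mul (g s * (g (s + 1))⁻¹) (g (s + 1))] at e2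
  have e3 := congrFun (congrFun e2 ⟨k + (a : ℕ), by omega⟩) (J.orderIsoOfFin hJ b : Fin n)
  refine e3.trans ?_
  rw [Matrix.mul_apply, Finset.sum_eq_single (⟨k - 1 + (a : ℕ), by omega⟩ : Fin n)]
  · rw [h1 _ _ (by simp only []; omega), one_mul]
  · intro j _ hj
    rw [h0 _ _ (by simp only []; omega), zero_mul]
    intro h
    apply hj
    ext
    simp only [] at h ⊢
    omega
  · intro h
    exact absurd (Finset.mem_univ _) h
end

section
/- Let ℛ_n be the quotient of the polynomial ring ℂ[X_{i,j} : i ∈ ℤ, 1 ≤ j ≤ n] by the ideal generated by the elements Y_{s,n} − 1 for all s ∈ ℤ, where Y_{s,n} denotes the determinant of the n×n matrix (X_{i,j})_{s ≤ i ≤ s+n−1, 1 ≤ j ≤ n}. Then ℛ_n is an integral domain and a unique factorization domain, and it is isomorphic as a ℂ-algebra to a polynomial ring in countably many variables with coefficients in the coordinate ring ℂ[SL_n] = ℂ[X_{i,j} : 1 ≤ i, j ≤ n]/(det(X_{i,j}) − 1). -/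
/-- `Y_{s,n}`: the determinant of the `n × n` matrix of variables `(X_{i,j})` with
`s ≤ i ≤ s+n−1`, `1 ≤ j ≤ n`. -/
noncomputable def bandWindowDet (n : ℕ) (s : ℤ) : MvPolynomial (ℤ × Fin n) ℂ :=
  (Matrix.of fun i j : Fin n => MvPolynomial.X ((s + (i : ℕ), j) : ℤ × Fin n)).det

/-- The ring `ℛ_n` of regular functions on the scheme of `(SL(n), c)`-bands: the quotient of
`ℂ[X_{i,j} : i ∈ ℤ, 1 ≤ j ≤ n]` by the ideal generated by the `Y_{s,n} − 1`, `s ∈ ℤ`. -/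
noncomputable abbrev BandRing (n : ℕ) : Type :=
  MvPolynomial (ℤ × Fin n) ℂ ⧸ Ideal.span {p | ∃ s : ℤ, p = bandWindowDet n s - 1}

/-- The generic `n × n` determinant polynomial `det (X_{i,j})`. -/
noncomputable def genericDet (n : ℕ) : MvPolynomial (Fin n × Fin n) ℂ :=
  (Matrix.of fun i j : Fin n => MvPolynomial.X ((i, j) : Fin n × Fin n)).det

/-- The coordinate ring `ℂ[SL_n] = ℂ[X_{i,j} : 1 ≤ i, j ≤ n]/(det − 1)`. -/
noncomputable abbrev SLCoordRing (n : ℕ) : Type :=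
  MvPolynomial (Fin n × Fin n) ℂ ⧸ Ideal.span {genericDet n - 1}


open Polynomial in
theorem band_monomial_of_mul {A : Type*} [CommRing A] [IsDomain A] {q r : A[X]} {a : A} {N : ℕ}
    (ha : a ≠ 0) (h : q * r = C a * X ^ N) : q = C q.leadingCoeff * X ^ q.natDegree := by
  have hne : q * r ≠ 0 := by
    rw [h]; exact mul_ne_zero (by simpa using ha) (pow_ne_zero _ X_ne_zero)
  have hq : q ≠ 0 := left_ne_zero_of_mul hne
  have hr : r ≠ 0 := right_ne_zero_of_mul hne
  have h1 : (q * r).natDegree = N := by rw [h]; exact natDegree_C_mul_X_pow N a ha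
  have h2 : (q * r).natTrailingDegree = N := by
    rw [h, natTrailingDegree_mul_X_pow (by simpa using ha)]; simp
  rw [natDegree_mul hq hr] at h1
  rw [natTrailingDegree_mul hq hr] at h2
  have h3 := q.natTrailingDegree_le_natDegree
  have h4 := r.natTrailingDegree_le_natDegree
  ext k
  rw [coeff_C_mul_X_pow]
  split_ifs with hk
  · subst hk; rfl
  · rcases lt_or_gt_of_ne hk with hk | hk
    · exact coeff_eq_zero_of_lt_natTrailingDegree (by omega)
    · exact coeff_eq_zero_of_natDegree_lt hk

open Polynomial in
theorem band_ufd_descent {A B : Type*} [CommRing A] [IsDomain A] [CommRing B] [IsDomain B]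
    [UniqueFactorizationMonoid B] (φ : B →+* A[X]) (hφ : Function.Injective φ) (d : B)
    (hd : φ d = X) (hs : ∀ q : A[X], ∃ (N : ℕ) (F : B), φ F = q * X ^ N) :
    UniqueFactorizationMonoid A := by
  -- leading coefficients of primes with monomial image
  have key : ∀ (p : B) (b : A) (k : ℕ), Prime p → φ p = C b * X ^ k → IsUnit b ∨ Prime b := by
    intro p b k hp hpb
    by_cases hb : IsUnit b
    · exact Or.inl hb
    refine Or.inr ⟨?_, hb, ?_⟩
    · rintro rfl
      apply hp.ne_zero
      apply hφ
      simp [hpb]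
    · have aux : ∀ (G : B) (c : A) (M : ℕ), φ G = C c * X ^ M → p ∣ G → b ∣ c := by
        rintro G c M hG ⟨e, rfl⟩
        have h1 : C b ∣ C c * X ^ M := by
          rw [← hG, map_mul, hpb]
          exact ⟨X ^ k * φ e, by ring⟩
        have := (C_dvd_iff_dvd_coeff _ _).1 h1 M
        simpa [coeff_C_mul_X_pow] using this
      rintro c e ⟨f, hf⟩
      obtain ⟨M, G, hG⟩ := hs (C c)
      obtain ⟨M', H, hH⟩ := hs (C e)
      obtain ⟨L, E, hE⟩ := hs (C f)
      have h2 : p * (E * d ^ (M + M')) = d ^ (k + L) * (G * H) := by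
        apply hφ
        simp only [map_mul, map_pow, hd, hG, hH, hE, hpb]
        have hf' : (C c * C e : A[X]) = C b * C f := by rw [← C_mul, hf, C_mul]
        linear_combination (-X ^ (k + L + M + M')) * hf'
      have h3 : p ∣ d ^ (k + L) * (G * H) := ⟨_, h2.symm⟩
      rcases hp.dvd_or_dvd h3 with h | h
      · exfalso
        have := hp.dvd_of_dvd_pow h
        have := aux d 1 1 (by simp [hd]) this
        exact hb (isUnit_of_dvd_one this)
      · rcases hp.dvd_or_dvd h with h | h
        · exact Or.inl (aux G c M hG h)
        · exact Or.inr (aux H e M' hH h)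
  have main : ∀ F : B, ∀ (a : A) (N : ℕ), a ≠ 0 → φ F = C a * X ^ N →
      ∃ f : Multiset A, (∀ b ∈ f, Prime b) ∧ Associated f.prod a := by
    intro F
    induction F using UniqueFactorizationMonoid.induction_on_prime with
    | h₁ =>
      intro a N ha h
      exfalso
      rw [map_zero] at h
      exact mul_ne_zero (by simpa using ha) (pow_ne_zero _ X_ne_zero) h.symm
    | h₂ u hu =>
      intro a N ha h
      refine ⟨0, by simp, ?_⟩
      have h1 : IsUnit (C a * X ^ N) := h ▸ hu.map φ
      have h2 : IsUnit (C a) := isUnit_of_mul_isUnit_left h1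
      simpa [associated_one_iff_isUnit, Associated.comm] using (associated_one_iff_isUnit.2 (isUnit_C.1 h2)).symm
    | h₃ F p hF hp ih =>
      intro a N ha h
      rw [map_mul] at h
      have h1 := band_monomial_of_mul ha h
      have h2 := band_monomial_of_mul ha ((mul_comm _ _).trans h)
      have hlc : (φ p).leadingCoeff * (φ F).leadingCoeff = a := by
        rw [← leadingCoeff_mul, h]; simp
      have hF0 : (φ F).leadingCoeff ≠ 0 := by
        intro h0; rw [h0, mul_zero] at hlc; exact ha hlc.symm
      obtain ⟨f, hf, hfa⟩ := ih _ _ hF0 h2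
      rcases key p _ _ hp h1 with hu | hpr
      · refine ⟨f, hf, hfa.trans ?_⟩
        rw [← hlc]
        exact (associated_isUnit_mul_left_iff hu).2 (Associated.refl _) |>.symm
      · refine ⟨(φ p).leadingCoeff ::ₘ f, ?_, ?_⟩
        · intro b hb
          rcases Multiset.mem_cons.1 hb with rfl | hb
          · exact hpr
          · exact hf b hb
        · rw [Multiset.prod_cons, ← hlc]
          exact hfa.mul_left _
  refine UniqueFactorizationMonoid.of_exists_prime_factors ?_
  intro a ha
  obtain ⟨N, F, hF⟩ := hs (C a)
  exact main F a N ha hF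

open Polynomial in
theorem band_domain_descent {A B K : Type*} [CommRing A] [CommRing B]
    [CommRing K] [IsDomain K] (φ : B →+* A[X]) (ψ : A[X] →+* K)
    (h : Function.Injective (ψ.comp φ))
    (hs : ∀ q : A[X], ∃ (N : ℕ) (F : B), φ F = q * X ^ N) : IsDomain A := by
  have hinj : Function.Injective ψ := by
    rw [injective_iff_map_eq_zero]
    intro q hq
    obtain ⟨N, F, hF⟩ := hs q
    have : F = 0 := by
      apply h
      simp [hF, hq]
    rw [this, map_zero] at hF
    ext k
    have := congrArg (fun r => r.coeff (k + N)) hF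
    simpa [coeff_mul_X_pow] using this.symm
  have : Function.Injective (ψ.comp C) := hinj.comp C_injective
  exact this.isDomain

theorem aeval_genericDet {n : ℕ} {S : Type*} [CommRing S] [Algebra ℂ S]
    (x : Fin n × Fin n → S) :
    MvPolynomial.aeval x (genericDet n) = (Matrix.of fun i j => x (i, j)).det := by
  rw [genericDet, AlgHom.map_det]
  congr 1
  ext i j
  simp

open Polynomial in
theorem slPhi_det_aux {A : Type*} [CommRing A] [Algebra ℂ A] {m : ℕ}
    (G : Matrix (Fin (m + 1)) (Fin (m + 1)) A) (hG : G.det = 1) :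
    MvPolynomial.aeval (fun p : Fin (m + 1) × Fin (m + 1) =>
      (if p.1 = 0 then X else 1 : A[X]) * C (G p.1 p.2)) (genericDet (m + 1)) = X := by
  rw [aeval_genericDet]
  have : (Matrix.of fun i j : Fin (m + 1) => (if i = 0 then X else 1 : A[X]) * C (G i j)) =
      Matrix.of fun i j => (if i = 0 then X else 1 : A[X]) * (C.mapMatrix G) i j := by
    ext1 i j
    simp
  rw [this, Matrix.det_mul_column, ← RingHom.map_det, hG]
  simp

/-- the generic SL matrix -/
noncomputable def slGen (n : ℕ) : Matrix (Fin n) (Fin n) (SLCoordRing n) :=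
  Matrix.of fun i j => Ideal.Quotient.mk _ (MvPolynomial.X (i, j))

theorem slGen_det (n : ℕ) : (slGen n).det = 1 := by
  have h : (Ideal.Quotient.mk (Ideal.span {genericDet n - 1})) (genericDet n) = 1 := by
    rw [← map_one (Ideal.Quotient.mk _), Ideal.Quotient.eq]
    exact Ideal.subset_span rfl
  refine Eq.trans ?_ h
  exact (RingHom.map_det (Ideal.Quotient.mk (Ideal.span {genericDet n - 1}))
    (Matrix.of fun i j : Fin n => MvPolynomial.X ((i, j) : Fin n × Fin n))).symm

/-- lift from the coordinate ring -/
noncomputable def slLift {n : ℕ} {S : Type*} [CommRing S] [Algebra ℂ S]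
    (M : Matrix (Fin n) (Fin n) S) (hM : M.det = 1) : SLCoordRing n →ₐ[ℂ] S :=
  Ideal.Quotient.liftₐ _ (MvPolynomial.aeval fun p : Fin n × Fin n => M p.1 p.2) (by
    intro a ha
    change a ∈ RingHom.ker _
    revert a
    change Ideal.span _ ≤ _
    rw [Ideal.span_le, Set.singleton_subset_iff]
    simp only [SetLike.mem_coe, RingHom.mem_ker, map_sub, map_one, genericDet, AlgHom.map_det]
    rw [sub_eq_zero, ← hM]
    congr 1
    ext i j
    simp)

theorem slLift_gen {n : ℕ} {S : Type*} [CommRing S] [Algebra ℂ S]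
    (M : Matrix (Fin n) (Fin n) S) (hM : M.det = 1) (i j : Fin n) :
    slLift M hM (slGen n i j) = M i j := by
  change MvPolynomial.aeval (fun p : Fin n × Fin n => M p.1 p.2) (MvPolynomial.X (i, j)) = M i j
  simp

open Polynomial in
/-- scaling the first row -/
noncomputable def slPhi (m : ℕ) :
    MvPolynomial (Fin (m + 1) × Fin (m + 1)) ℂ →ₐ[ℂ] (SLCoordRing (m + 1))[X] :=
  MvPolynomial.aeval fun p => (if p.1 = 0 then X else 1) * C (slGen (m + 1) p.1 p.2)

open Polynomial in
theorem slPhi_det (m : ℕ) : slPhi m (genericDet (m + 1)) = X := by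
  exact slPhi_det_aux (slGen (m + 1)) (slGen_det (m + 1))

open Polynomial in
theorem slPhi_surj (m : ℕ) (q : (SLCoordRing (m + 1))[X]) :
    ∃ (N : ℕ) (F : _), slPhi m F = q * X ^ N := by
  have hadd : ∀ p q : (SLCoordRing (m + 1))[X], (∃ (N : ℕ) (F : _), slPhi m F = p * X ^ N) →
      (∃ (N : ℕ) (F : _), slPhi m F = q * X ^ N) →
      (∃ (N : ℕ) (F : _), slPhi m F = (p + q) * X ^ N) := by
    rintro p q ⟨N, F, hF⟩ ⟨M, G, hG⟩
    refine ⟨N + M, F * genericDet _ ^ M + G * genericDet _ ^ N, ?_⟩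
    simp only [map_add, map_mul, map_pow, slPhi_det, hF, hG]
    ring
  have hmul : ∀ p q : (SLCoordRing (m + 1))[X], (∃ (N : ℕ) (F : _), slPhi m F = p * X ^ N) →
      (∃ (N : ℕ) (F : _), slPhi m F = q * X ^ N) →
      (∃ (N : ℕ) (F : _), slPhi m F = (p * q) * X ^ N) := by
    rintro p q ⟨N, F, hF⟩ ⟨M, G, hG⟩
    refine ⟨N + M, F * G, ?_⟩
    simp only [map_mul, hF, hG]
    ring
  have hC : ∀ a : SLCoordRing (m + 1), ∃ (N : ℕ) (F : _), slPhi m F = C a * X ^ N := by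
    intro a
    obtain ⟨p, rfl⟩ := Ideal.Quotient.mk_surjective a
    induction p using MvPolynomial.induction_on with
    | C c =>
      refine ⟨0, MvPolynomial.C c, ?_⟩
      rw [pow_zero, mul_one]
      exact (slPhi m).commutes c
    | add p q hp hq => rw [map_add, C_add]; exact hadd _ _ hp hq
    | mul_X p i hp =>
      rw [map_mul, C_mul]
      refine hmul _ _ hp ?_
      change ∃ (N : ℕ) (F : _), slPhi m F = C (slGen (m + 1) i.1 i.2) * X ^ N
      by_cases hi : i.1 = 0
      · exact ⟨1, MvPolynomial.X i, by simp [slPhi, hi]⟩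
      · exact ⟨0, MvPolynomial.X i, by simp [slPhi, hi]⟩
  induction q using Polynomial.induction_on' with
  | add p q hp hq => exact hadd _ _ hp hq
  | monomial k a =>
    rw [← C_mul_X_pow_eq_monomial]
    exact hmul _ _ (hC a) ⟨0, genericDet _ ^ k, by simp [slPhi_det]⟩

theorem genericDet_ne_zero (n : ℕ) : genericDet n ≠ 0 :=
  Matrix.det_mvPolynomialX_ne_zero (Fin n) ℂ

open Polynomial in
theorem slPhi_exists (m : ℕ) :
    ∃ ψ : (SLCoordRing (m + 1))[X] →+*
      FractionRing (MvPolynomial (Fin (m + 1) × Fin (m + 1)) ℂ),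
      Function.Injective (ψ.comp (slPhi m).toRingHom) := by
  set K := FractionRing (MvPolynomial (Fin (m + 1) × Fin (m + 1)) ℂ) with hK
  set ι := (IsScalarTower.toAlgHom ℂ (MvPolynomial (Fin (m + 1) × Fin (m + 1)) ℂ) K) with hι
  have hιinj : Function.Injective ι := IsFractionRing.injective _ K
  set D : K := ι (genericDet (m + 1)) with hD
  have hD0 : D ≠ 0 := by
    rw [hD, map_ne_zero_iff _ hιinj]
    exact genericDet_ne_zero _
  let M : Matrix (Fin (m + 1)) (Fin (m + 1)) K :=
    Matrix.of fun i j => (if i = 0 then D⁻¹ else 1) *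
      (ι.mapMatrix (Matrix.of fun i j => MvPolynomial.X (i, j))) i j
  have hM : M.det = 1 := by
    rw [Matrix.det_mul_column, ← AlgHom.map_det]
    change _ * D = 1
    simpa using inv_mul_cancel₀ hD0
  let ψ : (SLCoordRing (m + 1))[X] →+* K := eval₂RingHom (slLift M hM : _ →+* K) D
  have hψC : ∀ a, ψ (C a) = slLift M hM a := fun a => by simp [ψ]
  have hψX : ψ X = D := by simp [ψ]
  refine ⟨ψ, ?_⟩
  have : ψ.comp (slPhi m).toRingHom = (ι : _ →+* K) := by
    apply MvPolynomial.ringHom_ext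
    · intro c
      have h1 : slPhi m (MvPolynomial.C c) = C (algebraMap ℂ _ c) := (slPhi m).commutes c
      have h2 : ι (MvPolynomial.C c) = algebraMap ℂ K c := ι.commutes c
      change ψ (slPhi m (MvPolynomial.C c)) = ι (MvPolynomial.C c)
      rw [h1, h2, hψC, AlgHom.commutes]
    · rintro ⟨i, j⟩
      have h1 : slPhi m (MvPolynomial.X (i, j)) =
        (if i = 0 then X else 1) * C (slGen (m + 1) i j) := by simp [slPhi]
      change ψ (slPhi m (MvPolynomial.X (i, j))) = ι (MvPolynomial.X (i, j))
      rw [h1, map_mul, hψC, slLift_gen]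
      by_cases hi : i = 0
      · subst hi
        simp only [if_true, hψX, M, Matrix.of_apply, ← mul_assoc, mul_inv_cancel₀ hD0, one_mul]
        rfl
      · simp [hi, M]
  rw [this]
  exact hιinj

theorem slCoord_isDomain (m : ℕ) : IsDomain (SLCoordRing (m + 1)) := by
  obtain ⟨ψ, hψ⟩ := slPhi_exists m
  exact band_domain_descent _ ψ hψ (slPhi_surj m)

theorem slCoord_ufd (m : ℕ) [IsDomain (SLCoordRing (m + 1))] :
    UniqueFactorizationMonoid (SLCoordRing (m + 1)) := by
  obtain ⟨ψ, hψ⟩ := slPhi_exists m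
  refine band_ufd_descent (slPhi m).toRingHom ?_
    (genericDet (m + 1)) (slPhi_det m) (slPhi_surj m)
  rw [RingHom.coe_comp] at hψ
  exact hψ.of_comp


/-- A two-sided recursion in a group. -/
theorem band_exists_rec {G : Type*} [Group G] (g : G) (c : ℤ → G) :
    ∃ W : ℤ → G, W 0 = g ∧ ∀ s, W (s + 1) = c s * W s := by
  let f : ℕ → G := fun k => Nat.rec g (fun k w => c k * w) k
  let h : ℕ → G := fun k => Nat.rec g (fun k w => (c (-(k + 1 : ℤ)))⁻¹ * w) k
  refine ⟨fun s => if 0 ≤ s then f s.toNat else h (-s).toNat, by simp [f], ?_⟩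
  intro s
  rcases lt_trichotomy s (-1) with hs | hs | hs
  · obtain ⟨k, rfl⟩ : ∃ k : ℕ, s = -(k + 2 : ℤ) := ⟨(-s - 2).toNat, by omega⟩
    have h1 : (-(-(k + 2 : ℤ) + 1)).toNat = k + 1 := by omega
    have h2 : (-(-(k + 2 : ℤ))).toNat = (k + 1) + 1 := by omega
    simp only [h1, h2]
    rw [if_neg (by omega), if_neg (by omega)]
    have h3 : h (k + 1 + 1) = (c (-(k + 2 : ℤ)))⁻¹ * h (k + 1) := by
      have : (-(k + 2 : ℤ)) = -(((k + 1 : ℕ) : ℤ) + 1) := by push_cast; ring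
      rw [this]
    rw [h3, mul_inv_cancel_left]
  · subst hs
    simp [f, h]
  · obtain ⟨k, rfl⟩ : ∃ k : ℕ, s = k := ⟨s.toNat, by omega⟩
    have h1 : ((k : ℤ) + 1).toNat = k + 1 := by omega
    simp only [h1, Int.toNat_natCast]
    rw [if_pos (by omega), if_pos (by omega)]

theorem band_comp_det {S : Type*} [CommRing S] {m : ℕ} (M : Matrix (Fin (m + 1)) (Fin (m + 1)) S)
    (hM : ∀ (k : Fin m) j, M k.castSucc j = if j = k.succ then 1 else 0) :
    M.det = (-1) ^ m * M (Fin.last m) 0 := by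
  rw [Matrix.det_succ_column_zero, Fin.sum_univ_castSucc]
  have h1 : M.submatrix (Fin.last m).succAbove Fin.succ = 1 := by
    ext i j
    simp [hM, Matrix.one_apply, eq_comm]
  rw [h1]
  have h2 : ∀ k : Fin m, M k.castSucc 0 = 0 := fun k => by
    rw [hM, if_neg (Fin.succ_ne_zero k).symm]
  simp [h2]

/-- companion matrix of determinant one -/
def bandComp {S : Type*} [CommRing S] {m : ℕ} (a : Fin m → S) :
    Matrix (Fin (m + 1)) (Fin (m + 1)) S :=
  Matrix.of fun i j => Fin.lastCases (motive := fun _ => S) (Fin.cases ((-1) ^ m) a j)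
    (fun k => if j = k.succ then 1 else 0) i

theorem bandComp_castSucc {S : Type*} [CommRing S] {m : ℕ} (a : Fin m → S) (k : Fin m)
    (j : Fin (m + 1)) : bandComp a k.castSucc j = if j = k.succ then 1 else 0 := by
  simp [bandComp]

theorem bandComp_last_zero {S : Type*} [CommRing S] {m : ℕ} (a : Fin m → S) :
    bandComp a (Fin.last m) 0 = (-1) ^ m := by
  simp [bandComp]

theorem bandComp_last_succ {S : Type*} [CommRing S] {m : ℕ} (a : Fin m → S) (k : Fin m) :
    bandComp a (Fin.last m) k.succ = a k := by
  simp [bandComp]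

/-- companion matrix as an element of the special linear group -/
def bandCompSL {S : Type*} [CommRing S] {m : ℕ} (a : Fin m → S) :
    Matrix.SpecialLinearGroup (Fin (m + 1)) S :=
  ⟨bandComp a, by
    rw [band_comp_det _ (bandComp_castSucc a), bandComp_last_zero, ← mul_pow]; simp⟩

theorem bandCompSL_unique {S : Type*} [CommRing S] {m : ℕ}
    (P Q : Matrix.SpecialLinearGroup (Fin (m + 1)) S)
    (h : ∀ (k : Fin m) l, P k.castSucc l = Q k.succ l) :
    P * Q⁻¹ = bandCompSL (fun k => (P * Q⁻¹) (Fin.last m) k.succ) := by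
  have h1 : ∀ (k : Fin m) j, (P * Q⁻¹) k.castSucc j = if j = k.succ then 1 else 0 := by
    intro k j
    have h2 : (Q * Q⁻¹) k.succ j = if j = k.succ then 1 else 0 := by
      rw [mul_inv_cancel, Matrix.SpecialLinearGroup.coe_one, Matrix.one_apply]
      simp [eq_comm]
    rw [← h2, Matrix.SpecialLinearGroup.coe_mul, Matrix.SpecialLinearGroup.coe_mul,
      Matrix.mul_apply, Matrix.mul_apply]
    exact Finset.sum_congr rfl fun l _ => by rw [h]
  have h3 := band_comp_det _ h1
  rw [Matrix.SpecialLinearGroup.det_coe] at h3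
  apply Matrix.SpecialLinearGroup.ext
  intro i j
  change _ = bandComp _ i j
  induction i using Fin.lastCases with
  | cast k => rw [h1, bandComp_castSucc]
  | last =>
    induction j using Fin.cases with
    | zero =>
      rw [bandComp_last_zero]
      calc _ = ((-1) ^ m * (-1) ^ m) * (P * Q⁻¹) (Fin.last m) 0 := by rw [← mul_pow]; simp
        _ = (-1) ^ m * ((-1) ^ m * (P * Q⁻¹) (Fin.last m) 0) := by ring
        _ = _ := by rw [← h3, mul_one]
    | succ j => rw [bandComp_last_succ]

theorem bandCompSL_shift {S : Type*} [CommRing S] {m : ℕ} (a : Fin m → S)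
    (Q : Matrix.SpecialLinearGroup (Fin (m + 1)) S) (k : Fin m) (l : Fin (m + 1)) :
    (bandCompSL a * Q) k.castSucc l = Q k.succ l := by
  rw [Matrix.SpecialLinearGroup.coe_mul, Matrix.mul_apply]
  change ∑ j, bandComp a k.castSucc j * _ = _
  simp [bandComp_castSucc]

theorem bandCompSL_map {S S' : Type*} [CommRing S] [CommRing S'] {m : ℕ} (f : S →+* S')
    (a : Fin m → S) :
    Matrix.SpecialLinearGroup.map f (bandCompSL a) = bandCompSL (fun k => f (a k)) := by
  apply Matrix.SpecialLinearGroup.ext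
  intro i j
  change f (bandComp a i j) = bandComp _ i j
  induction i using Fin.lastCases with
  | cast k => rw [bandComp_castSucc, bandComp_castSucc]; split_ifs <;> simp
  | last =>
    induction j using Fin.cases with
    | zero => rw [bandComp_last_zero, bandComp_last_zero]; simp
    | succ j => rw [bandComp_last_succ, bandComp_last_succ]

/-- the universal window -/
noncomputable def bandV (n : ℕ) (s : ℤ) : Matrix.SpecialLinearGroup (Fin n) (BandRing n) :=
  ⟨Matrix.of fun i j => Ideal.Quotient.mk _ (MvPolynomial.X (s + (i : ℕ), j)), by
    have h : (Ideal.Quotient.mk (Ideal.span {p | ∃ s : ℤ, p = bandWindowDet n s - 1}))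
        (bandWindowDet n s) = 1 := by
      rw [← map_one (Ideal.Quotient.mk _), Ideal.Quotient.eq]
      exact Ideal.subset_span ⟨s, rfl⟩
    refine Eq.trans ?_ h
    exact (RingHom.map_det (Ideal.Quotient.mk _)
      (Matrix.of fun i j : Fin n => (MvPolynomial.X ((s + (i : ℕ), j) : ℤ × Fin n)
        : MvPolynomial (ℤ × Fin n) ℂ))).symm⟩

/-- lift from the band ring -/
noncomputable def bandLift {n : ℕ} {S : Type*} [CommRing S] [Algebra ℂ S]
    (x : ℤ → Fin n → S) (hx : ∀ s : ℤ, (Matrix.of fun i j : Fin n => x (s + (i : ℕ)) j).det = 1) :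
    BandRing n →ₐ[ℂ] S :=
  Ideal.Quotient.liftₐ _ (MvPolynomial.aeval fun p : ℤ × Fin n => x p.1 p.2) (by
    intro a ha
    change a ∈ RingHom.ker _
    revert a
    change Ideal.span _ ≤ _
    rw [Ideal.span_le]
    rintro _ ⟨s, rfl⟩
    simp only [SetLike.mem_coe, RingHom.mem_ker, map_sub, map_one, bandWindowDet, AlgHom.map_det]
    rw [sub_eq_zero, ← hx s]
    congr 1
    ext i j
    simp)

theorem bandLift_V {n : ℕ} {S : Type*} [CommRing S] [Algebra ℂ S]
    (x : ℤ → Fin n → S) (hx : ∀ s : ℤ, (Matrix.of fun i j : Fin n => x (s + (i : ℕ)) j).det = 1)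
    (s : ℤ) (i j : Fin n) :
    bandLift x hx (bandV n s i j) = x (s + (i : ℕ)) j := by
  change MvPolynomial.aeval (fun p : ℤ × Fin n => x p.1 p.2) (MvPolynomial.X (s + (i : ℕ), j)) = _
  simp

theorem bandV_shift (m : ℕ) (s : ℤ) (k : Fin m) (l : Fin (m + 1)) :
    bandV (m + 1) (s + 1) k.castSucc l = bandV (m + 1) s k.succ l := by
  change Ideal.Quotient.mk _ (MvPolynomial.X _) = Ideal.Quotient.mk _ (MvPolynomial.X _)
  congr 3
  simp; ring

/-- the generic element of SL -/
noncomputable def slGenSL (n : ℕ) : Matrix.SpecialLinearGroup (Fin n) (SLCoordRing n) :=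
  ⟨slGen n, slGen_det n⟩

theorem band_equiv (m : ℕ) :
    Nonempty (BandRing (m + 1) ≃ₐ[ℂ] MvPolynomial (ℤ × Fin m) (SLCoordRing (m + 1))) := by
  set T := MvPolynomial (ℤ × Fin m) (SLCoordRing (m + 1)) with hT
  let c : ℤ → Matrix.SpecialLinearGroup (Fin (m + 1)) T := fun s =>
    bandCompSL (fun k => MvPolynomial.X (s, k))
  obtain ⟨W, hW0, hW⟩ := band_exists_rec
    (Matrix.SpecialLinearGroup.map (MvPolynomial.C : _ →+* T) (slGenSL (m + 1))) c
  have hrow : ∀ (i : ℕ) (hi : i < m + 1) (s : ℤ) (j : Fin (m + 1)),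
      W (s + i) 0 j = W s ⟨i, hi⟩ j := by
    intro i
    induction i with
    | zero => intro hi s j; simp
    | succ i ih =>
      intro hi s j
      have := ih (by omega) (s + 1) j
      rw [hW s] at this
      have h2 := bandCompSL_shift (fun k => (MvPolynomial.X (s, k) : T)) (W s) ⟨i, by omega⟩ j
      have e : s + ((i + 1 : ℕ) : ℤ) = s + 1 + i := by push_cast; ring
      rw [e, this]
      exact h2
  have hdet : ∀ s : ℤ, (Matrix.of fun i j : Fin (m + 1) => W (s + (i : ℕ)) 0 j).det = 1 := by
    intro s
    refine Eq.trans ?_ (W s).det_coe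
    congr 1
    exact Matrix.ext fun i j => hrow i i.2 s j
  let Φ : BandRing (m + 1) →ₐ[ℂ] T := bandLift (fun i j => W i 0 j) hdet
  let Ψ : T →ₐ[ℂ] BandRing (m + 1) := MvPolynomial.aevalTower
    (slLift (bandV (m + 1) 0).1 (bandV (m + 1) 0).2)
    (fun p => (bandV (m + 1) (p.1 + 1) * (bandV (m + 1) p.1)⁻¹) (Fin.last m) p.2.succ)
  have hΦ : ∀ s, Matrix.SpecialLinearGroup.map Φ.toRingHom (bandV (m + 1) s) = W s := by
    intro s
    apply Matrix.SpecialLinearGroup.ext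
    intro i j
    change Φ (bandV (m + 1) s i j) = _
    rw [bandLift_V]
    exact hrow i i.2 s j
  have hc : ∀ s, Matrix.SpecialLinearGroup.map Ψ.toRingHom (c s) =
      bandV (m + 1) (s + 1) * (bandV (m + 1) s)⁻¹ := by
    intro s
    rw [bandCompSL_unique _ _ (bandV_shift m s), bandCompSL_map]
    congr 1
    ext k
    change Ψ (MvPolynomial.X (s, k)) = _
    exact MvPolynomial.aevalTower_X _ _ _
  have hΨ : ∀ s, Matrix.SpecialLinearGroup.map Ψ.toRingHom (W s) = bandV (m + 1) s := by
    intro s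
    induction s using Int.induction_on with
    | zero =>
      rw [hW0]
      apply Matrix.SpecialLinearGroup.ext
      intro i j
      change Ψ (MvPolynomial.C (slGen (m + 1) i j)) = _
      exact (MvPolynomial.aevalTower_C _ _ _).trans (slLift_gen _ _ i j)
    | succ s ih =>
      rw [hW, map_mul, hc, ih, inv_mul_cancel_right]
    | pred s ih =>
      have h1 := hW (-s - 1)
      have h2 := hc (-s - 1)
      rw [sub_add_cancel] at h1 h2
      rw [h1, map_mul, h2, mul_assoc] at ih
      exact (inv_mul_eq_one.1 (mul_eq_left.1 ih)).symm
  refine ⟨AlgEquiv.ofAlgHom Φ Ψ ?_ ?_⟩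
  · apply MvPolynomial.algHom_ext'
    · apply Ideal.Quotient.algHom_ext
      apply MvPolynomial.algHom_ext
      rintro ⟨i, j⟩
      change Φ (Ψ (MvPolynomial.C (slGen (m + 1) i j))) = MvPolynomial.C (slGen (m + 1) i j)
      have h1 : Ψ (MvPolynomial.C (slGen (m + 1) i j)) = bandV (m + 1) 0 i j :=
        (MvPolynomial.aevalTower_C _ _ _).trans (slLift_gen _ _ i j)
      rw [h1]
      have h2 := congrArg (fun M => M i j) (hΦ 0)
      rw [hW0] at h2
      exact h2
    · rintro ⟨s, k⟩
      change Φ (Ψ (MvPolynomial.X (s, k))) = MvPolynomial.X (s, k)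
      have h1 : Ψ (MvPolynomial.X (s, k)) =
        (bandV (m + 1) (s + 1) * (bandV (m + 1) s)⁻¹) (Fin.last m) k.succ :=
        MvPolynomial.aevalTower_X _ _ _
      rw [h1]
      have h2 : Matrix.SpecialLinearGroup.map Φ.toRingHom
        (bandV (m + 1) (s + 1) * (bandV (m + 1) s)⁻¹) = c s := by
        rw [map_mul, map_inv, hΦ, hΦ, hW, mul_inv_cancel_right]
      have h3 := congrArg (fun M => M (Fin.last m) k.succ) h2
      refine Eq.trans h3 ?_
      exact bandComp_last_succ _ _
  · apply Ideal.Quotient.algHom_ext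
    apply MvPolynomial.algHom_ext
    rintro ⟨i, j⟩
    have e : (Ideal.Quotient.mk (Ideal.span {p | ∃ s : ℤ, p = bandWindowDet (m + 1) s - 1}))
      (MvPolynomial.X (i, j)) = bandV (m + 1) i 0 j := by
      change _ = Ideal.Quotient.mk _ (MvPolynomial.X (i + ((0 : ℕ) : ℤ), j))
      simp
    change Ψ (Φ (Ideal.Quotient.mk _ (MvPolynomial.X (i, j)))) =
      Ideal.Quotient.mk _ (MvPolynomial.X (i, j))
    rw [e]
    have h1 : Φ (bandV (m + 1) i 0 j) = W i 0 j :=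
      congrArg (fun M => M 0 j) (hΦ i)
    rw [h1]
    exact congrArg (fun M => M 0 j) (hΨ i)

/-- `ℛ_n` is an integral domain and a unique factorization domain, isomorphic as
a `ℂ`-algebra to a polynomial ring in countably many variables with coefficients in
`ℂ[SL_n]`. -/
theorem stmt_17 (n : ℕ) (hn : 2 ≤ n) :
    ∃ _ : IsDomain (BandRing n), UniqueFactorizationMonoid (BandRing n) ∧
      Nonempty (BandRing n ≃ₐ[ℂ] MvPolynomial ℕ (SLCoordRing n)) := by
  obtain ⟨m, rfl⟩ : ∃ m, n = m + 2 := ⟨n - 2, by omega⟩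
  obtain ⟨e⟩ := band_equiv (m + 1)
  obtain ⟨f⟩ : Nonempty (ℤ × Fin (m + 1) ≃ ℕ) := nonempty_equiv_of_countable
  let E : BandRing (m + 2) ≃ₐ[ℂ] MvPolynomial ℕ (SLCoordRing (m + 2)) :=
    e.trans ((MvPolynomial.renameEquiv (SLCoordRing (m + 2)) f).restrictScalars ℂ)
  have : IsDomain (SLCoordRing (m + 2)) := slCoord_isDomain (m + 1)
  have : UniqueFactorizationMonoid (SLCoordRing (m + 2)) := slCoord_ufd (m + 1)
  have hd : IsDomain (BandRing (m + 2)) := E.toMulEquiv.isDomain _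
  exact ⟨hd, E.symm.toMulEquiv.uniqueFactorizationMonoid inferInstance, ⟨E⟩⟩
end
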